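/- Let T ∈ 𝓔^ω be orientation-preserving with T(π(0)) = π(0) and fix C_* > 0 and λ_* > 1 with |(T^n)'(x)| ≥ C_* λ_*^n for all x and n. Let 𝓓 be a dense subset of 𝓒^1 consisting of C^2 functions. Let f_0 ∈ 𝓒^2 be such that the topological entropy of T restricted to K(f_0,T) is less than (1/3)·log λ_* and such that K(f_0,T) contains no periodic point of T. Then there exist an open neighborhood 𝓤 of f_0 in 𝓒^2 and finitely many φ_1,…,φ_J ∈ 𝓓 such that for every f ∈ 𝓒^2, the set {(t_1,…,t_J) ∈ [0,1]^J : f + t_1φ_1 + ⋯ + t_Jφ_J belongs to 𝓤 and has a supercritical value} has Lebesgue measure zero. -/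

import Mathlib

/-!
Write `T` for the circle map. The derivative of `h^f_i` at `x` is `∑_{k ≥ 1} f'(y_k) /
(T^k)'(y_k)`, where `x = y_0, y_1, y_2, …` is the backward orbit coded by the word `i`. A
supercritical value of `f` therefore gives two backward orbits `y`, `z` in `K(f, T)` with the same
base point, whose first preimages are a definite distance apart, and with equal sums: a zero of
the gap `L_f(y, z)` between the two sums, which is linear in `f`.

*Nondegeneracy.* As `K(f₀, T)` contains no periodic point, `y_1` differs from all the other `y_k`
and from all the `z_k`. Testing against functions whose derivatives concentrate at `y_1` shows
that `φ ↦ L_φ(y, z)` does not vanish on the dense set `𝓓`. By compactness of the space of pairs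
there are finitely many `φ_j ∈ 𝓓` and `c > 0` such that `max_j |L_{φ_j}(y, z)| ≥ c` for all pairs
in a neighbourhood of `K(f₀, T)`, which contains `K(f, T)` for `f` near `f₀` by upper
semicontinuity.

*Counting.* Since the entropy is below `log λ / 3`, for every `θ > 0` there is `n` such that the
points whose orbits stay near `K(f₀, T)` are covered by `N` Bowen balls of length `n` with `N ^ 3
≤ θ λ ^ n`. Sorting the pairs `(y, z)` by the Bowen balls of `y_0`, `y_n` and `z_n` makes `N ^ 3`
cells, on each of which the gaps oscillate by `O(λ ^ {-n})`. The gap of `f + ∑ t_j φ_j` is affine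
in `t`, so each cell contributes parameters from a slab of the cube of width `O(λ ^ {-n} / c)`,
and the total measure is `O(θ)`.
-/

open MeasureTheory Topology Filter Set
open scoped UniformConvergence

noncomputable section

/-- The circle `ℝ/ℤ`. -/
abbrev Circle1 : Type := AddCircle (1 : ℝ)

/-- The canonical representative in `[0,1)` of a point of `ℝ/ℤ`. -/
noncomputable def rep (z : Circle1) : ℝ := (AddCircle.equivIco 1 0 z : ℝ)

/-- The circle map induced by a lift `F : ℝ → ℝ`. -/
noncomputable def cmap (F : ℝ → ℝ) : Circle1 → Circle1 := fun z => ((F (rep z) : ℝ) : Circle1)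

/-- The data determining the `C^r` topology: all derivatives of order `≤ r`, viewed in the
space of functions `ℝ → ℝ` with the uniform-convergence topology. -/
noncomputable def crSeq (r : ℕ∞) (f : ℝ → ℝ) : ℕ → (ℝ →ᵤ ℝ) :=
  fun k => UniformFun.ofFun (if (k : ℕ∞) ≤ r then iteratedDeriv k f else 0)

/-- The space `𝓒^r` of `C^r` functions `ℝ/ℤ → ℝ`. -/
def CrFun (r : ℕ∞) : Type := {f : Circle1 → ℝ // ContDiff ℝ r fun x : ℝ => f ↑x}

/-- The `C^r` topology on `𝓒^r`. -/
noncomputable instance (r : ℕ∞) : TopologicalSpace (CrFun r) :=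
  TopologicalSpace.induced (fun f : CrFun r => crSeq r fun x : ℝ => f.1 ↑x) inferInstance

/-- `F : ℝ → ℝ` is a lift of a `C^r` expanding circle map: it is `C^r`, sends `x+1` to
`F x + d` for a fixed integer `d`, and `|(Fⁿ)'| ≥ C λⁿ` for some `C > 0`, `λ > 1`. -/
def ExpandingLift (r : ℕ∞) (F : ℝ → ℝ) : Prop :=
  ContDiff ℝ r F ∧ (∃ d : ℤ, ∀ x : ℝ, F (x + 1) = F x + d) ∧
    ∃ C > (0 : ℝ), ∃ l > (1 : ℝ), ∀ n : ℕ, 1 ≤ n → ∀ x : ℝ, C * l ^ n ≤ |deriv (F^[n]) x|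

/-- The space `𝓔^r` of (lifts of) `C^r` expanding circle maps, with the `C^r` topology. -/
def ExpMap (r : ℕ∞) : Type := {F : ℝ → ℝ // ExpandingLift r F}

noncomputable instance (r : ℕ∞) : TopologicalSpace (ExpMap r) :=
  TopologicalSpace.induced (fun F : ExpMap r => crSeq r F.1) inferInstance

/-- `μ` is a `T`-invariant Borel probability measure. -/
def InvProb (T : Circle1 → Circle1) (μ : Measure Circle1) : Prop :=
  IsProbabilityMeasure μ ∧ μ.map T = μ

/-- `β(f,T)`, the maximal ergodic average. -/
noncomputable def beta (f : Circle1 → ℝ) (T : Circle1 → Circle1) : ℝ :=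
  sSup ((fun μ : Measure Circle1 => ∫ x, f x ∂μ) '' {μ | InvProb T μ})

/-- `μ` is a maximizing measure for `(f,T)`. -/
def IsMaximizing (f : Circle1 → ℝ) (T : Circle1 → Circle1) (μ : Measure Circle1) : Prop :=
  InvProb T μ ∧ ∫ x, f x ∂μ = beta f T

/-- `μ` is a periodic measure: an invariant measure supported on a periodic orbit. -/
def IsPeriodicMeasure (T : Circle1 → Circle1) (μ : Measure Circle1) : Prop :=
  InvProb T μ ∧ ∃ x : Circle1, ∃ n : ℕ, 0 < n ∧ T^[n] x = x ∧
    μ (Set.range fun k : ℕ => T^[k] x) = 1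

/-- `(f,T)` is uniquely maximized by a periodic measure. -/
def UniqMaxPeriodic (f : Circle1 → ℝ) (T : Circle1 → Circle1) : Prop :=
  ∃ μ : Measure Circle1, IsMaximizing f T μ ∧ IsPeriodicMeasure T μ ∧
    ∀ ν : Measure Circle1, IsMaximizing f T ν → ν = μ

/-- A (continuous) sub-action for `(f,T)`. -/
def IsSubaction (f : Circle1 → ℝ) (T : Circle1 → Circle1) (g : Circle1 → ℝ) : Prop :=
  Continuous g ∧ ∀ x, g x + f x ≤ g (T x) + beta f T

/-- A calibrated sub-action for `(f,T)`. -/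
def IsCalibrated (f : Circle1 → ℝ) (T : Circle1 → Circle1) (g : Circle1 → ℝ) : Prop :=
  IsSubaction f T g ∧ ∀ x, ∃ y, T y = x ∧ g y + f y = g x + beta f T

/-- `G_{f,T}`: the set of Lipschitz calibrated sub-actions of `(f,T)`. -/
def Gset (f : Circle1 → ℝ) (T : Circle1 → Circle1) : Set (Circle1 → ℝ) :=
  {g | (∃ K : NNReal, LipschitzWith K g) ∧ IsCalibrated f T g}

/-- The set `E_{f,T,g}`. -/
def Eset (f : Circle1 → ℝ) (T : Circle1 → Circle1) (g : Circle1 → ℝ) : Set Circle1 :=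
  {x | g x + f x = g (T x) + beta f T}

/-- The set `Λ*_{f,T,g}`. -/
def LambdaStar (f : Circle1 → ℝ) (T : Circle1 → Circle1) (g : Circle1 → ℝ) : Set Circle1 :=
  {x | ∀ n : ℕ, T^[n] x ∈ Eset f T g}

/-- The set `Λ_{f,T,g}`. -/
def Lambda (f : Circle1 → ℝ) (T : Circle1 → Circle1) (g : Circle1 → ℝ) : Set Circle1 :=
  ⋂ n : ℕ, T^[n] '' LambdaStar f T g

/-- The set `K(f,T)`. -/
def Kset (f : Circle1 → ℝ) (T : Circle1 → Circle1) : Set Circle1 :=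
  ⋃ g ∈ Gset f T, Lambda f T g

/-- The `(f,T)`-non-wandering set `Ω(f,T)`. -/
def OmegaSet (f : Circle1 → ℝ) (T : Circle1 → Circle1) : Set Circle1 :=
  {x | ∀ ε > (0 : ℝ), ∃ n : ℕ, 1 ≤ n ∧ ∃ z : Circle1, T^[n] z = x ∧ dist z x < ε ∧
    |∑ i ∈ Finset.range n, (f (T^[i] z) - beta f T)| < ε}

/-- `A` is a periodic orbit of `T`. -/
def IsPeriodicOrbit (T : Circle1 → Circle1) (A : Set Circle1) : Prop :=
  ∃ x : Circle1, (∃ n : ℕ, 0 < n ∧ T^[n] x = x) ∧ A = Set.range fun k : ℕ => T^[k] x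

/-- `A` is a `T`-minimal set: a nonempty compact invariant set with no proper nonempty
compact invariant subset. -/
def IsMinimalSet (T : Circle1 → Circle1) (A : Set Circle1) : Prop :=
  A.Nonempty ∧ IsCompact A ∧ T '' A ⊆ A ∧
    ∀ B ⊆ A, B.Nonempty → IsCompact B → T '' B ⊆ B → B = A

/-- The space of `C^r` families of functions on the circle with `q` parameters,
i.e. maps `(t,x) ↦ f_t(x)` that are jointly `C^r` (the circle variable via a lift). -/
def FamFun (r : ℕ∞) (q : ℕ) : Type :=
  {G : ((Fin q → ℝ) × ℝ) → ℝ // ContDiff ℝ r G ∧ ∀ t x, G (t, x + 1) = G (t, x)}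

noncomputable def famSeq (r : ℕ∞) (q : ℕ) (G : ((Fin q → ℝ) × ℝ) → ℝ) :
    (k : ℕ) → (((Fin q → ℝ) × ℝ) →ᵤ (((Fin q → ℝ) × ℝ) [×k]→L[ℝ] ℝ)) :=
  fun k => UniformFun.ofFun (if (k : ℕ∞) ≤ r then iteratedFDeriv ℝ k G else 0)

/-- The `C^r` topology on the space of `C^r` families. -/
noncomputable instance (r : ℕ∞) (q : ℕ) : TopologicalSpace (FamFun r q) :=
  TopologicalSpace.induced (fun G : FamFun r q => famSeq r q G.1) inferInstance

/-- The member `f_t : ℝ/ℤ → ℝ` of a family, at the parameter `t`. -/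
noncomputable def famMem {r : ℕ∞} {q : ℕ} (G : FamFun r q) (t : Fin q → ℝ) : Circle1 → ℝ :=
  fun z => G.1 (t, rep z)

/-- The product `m_∞` over `ℕ` of Lebesgue measure on `[0,1]`, realised as the pushforward of
the Haar probability measure of the compact group `(ℝ/ℤ)^ℕ` under the coordinatewise choice of
representatives in `[0,1)`. -/
noncomputable def mInfty : Measure (ℕ → ℝ) :=
  Measure.map (fun (t : ℕ → Circle1) (n : ℕ) => rep (t n))
    (MeasureTheory.Measure.addHaarMeasure (⊤ : TopologicalSpace.PositiveCompacts (ℕ → Circle1)))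

/-- `S` is an `N`-dimensionally shy subset of a normed real vector space `V`. -/
def NDimShy {V : Type*} [NormedAddCommGroup V] [NormedSpace ℝ V] (N : ℕ) (S : Set V) : Prop :=
  ∃ φ : Fin N → V, ∀ f : V,
    volume {t : Fin N → ℝ | (∀ i, t i ∈ Set.Icc (0 : ℝ) 1) ∧ f + ∑ i, t i • φ i ∈ S} = 0

/-- `S` is a finite dimensionally shy subset of a normed real vector space `V`. -/
def FinDimShy {V : Type*} [NormedAddCommGroup V] [NormedSpace ℝ V] (S : Set V) : Prop :=
  ∃ N : ℕ, 0 < N ∧ NDimShy N S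

/-- `S` is a shy subset of `V`: there are a compactly supported Borel probability measure `μ`
on `V` and a Borel set `S̃ ⊇ S` all of whose translates are `μ`-null. -/
def IsShy {V : Type*} [NormedAddCommGroup V] [NormedSpace ℝ V] (S : Set V) : Prop :=
  letI : MeasurableSpace V := borel V
  ∃ μ : Measure V, μ Set.univ = 1 ∧ (∃ K : Set V, IsCompact K ∧ μ K = 1) ∧
    ∃ St : Set V, MeasurableSet St ∧ S ⊆ St ∧
      ∀ v : V, μ ((fun x => x + v) ⁻¹' St) = 0

/-- `S` is a prevalent subset of `V`. -/
def IsPrevalent {V : Type*} [NormedAddCommGroup V] [NormedSpace ℝ V] (S : Set V) : Prop :=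
  IsShy Sᶜ

/-- `F` is the (normalized) lift of an orientation-preserving real analytic expanding circle
map of degree `d` fixing `π(0)`. -/
def AnalyticExpandingLift (F : ℝ → ℝ) (d : ℕ) : Prop :=
  (∀ x : ℝ, AnalyticAt ℝ F x) ∧ (∀ x : ℝ, F (x + 1) = F x + d) ∧ StrictMono F ∧ F 0 = 0 ∧
    2 ≤ d ∧ ∃ C > (0 : ℝ), ∃ l > (1 : ℝ), ∀ n : ℕ, 1 ≤ n → ∀ x : ℝ, C * l ^ n ≤ |deriv (F^[n]) x|

/-- The inverse branches `τ_{i,n} = τ_{i_n} ∘ ⋯ ∘ τ_{i_1}`, where `τ = F⁻¹` and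
`τ_i(x) = τ(x+i)`; the word `i` is indexed from `0`, so `i 0` is the first letter `i_1`. -/
noncomputable def tauIter (F : ℝ → ℝ) {d : ℕ} (i : ℕ → Fin d) : ℕ → ℝ → ℝ
  | 0, x => x
  | n + 1, x => Function.invFun F (tauIter F i n x + ((i n : ℕ) : ℝ))

/-- The function `h^f_i` associated to an infinite word `i`. -/
noncomputable def hSum (F : ℝ → ℝ) {d : ℕ} (i : ℕ → Fin d) (f : Circle1 → ℝ) : ℝ → ℝ :=
  fun x => ∑' n : ℕ,
    (f ((tauIter F i (n + 1) x : ℝ) : Circle1) - f ((tauIter F i (n + 1) 0 : ℝ) : Circle1))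

/-- The function `h^f_i` associated to a finite word of length `m` (the first `m` letters
of `i`). -/
noncomputable def hSumFin (F : ℝ → ℝ) {d : ℕ} (i : ℕ → Fin d) (m : ℕ) (f : Circle1 → ℝ) :
    ℝ → ℝ :=
  fun x => ∑ n ∈ Finset.range m,
    (f ((tauIter F i (n + 1) x : ℝ) : Circle1) - f ((tauIter F i (n + 1) 0 : ℝ) : Circle1))

/-- `i ∈ CL(x,K)`: all backward images of `x` along the word `i` lie over `K`. -/
def WordIn (F : ℝ → ℝ) {d : ℕ} (i : ℕ → Fin d) (x : ℝ) (K : Set Circle1) : Prop :=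
  ∀ n : ℕ, 1 ≤ n → ((tauIter F i n x : ℝ) : Circle1) ∈ K

/-- `x` (a real, lying over `K`) is an `f`-supercritical value of `K`. -/
def IsSupercriticalValue (F : ℝ → ℝ) (d : ℕ) (f : Circle1 → ℝ) (K : Set Circle1) (x : ℝ) :
    Prop :=
  ((x : ℝ) : Circle1) ∈ K ∧ ∃ i j : ℕ → Fin d, WordIn F i x K ∧ WordIn F j x K ∧ i 0 ≠ j 0 ∧
    deriv (hSum F i f) x = deriv (hSum F j f) x

/-- `x` is a critical value of `T|K`. -/
def IsCriticalValue (T : Circle1 → Circle1) (K : Set Circle1) (x : Circle1) : Prop :=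
  x ∈ K ∧ ∃ y z, y ∈ K ∧ z ∈ K ∧ y ≠ z ∧ T y = x ∧ T z = x

/-- A critical value `x` of `T|K` is regular: on each side of `x` there is a continuous
inverse branch of `T` selecting the unique preimage in `K`. -/
def IsRegularCriticalValue (T : Circle1 → Circle1) (K : Set Circle1) (x : Circle1) : Prop :=
  ∃ U : Set Circle1, U ∈ 𝓝 x ∧ IsConnected U ∧
    ∀ b ∈ U \ {x}, ∃ s : Circle1 → Circle1,
      ContinuousOn s (connectedComponentIn (U \ {x}) b) ∧
      (∀ y ∈ connectedComponentIn (U \ {x}) b, T (s y) = y) ∧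
      (∀ y ∈ K ∩ connectedComponentIn (U \ {x}) b, T ⁻¹' {y} ∩ K = {s y})

/-- `T|K` is Sturmian-like: every critical value is regular. -/
def SturmianLike (T : Circle1 → Circle1) (K : Set Circle1) : Prop :=
  ∀ x, IsCriticalValue T K x → IsRegularCriticalValue T K x

/-- `f : ℝ/ℤ → ℝ` is a trigonometric polynomial. -/
def IsTrigPoly (f : Circle1 → ℝ) : Prop :=
  ∃ m : ℕ, ∃ a b : ℕ → ℝ, ∀ x : ℝ,
    f ↑x = a 0 + ∑ k ∈ Finset.range m,
      (a (k + 1) * Real.cos (2 * Real.pi * (k + 1) * x) +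
        b (k + 1) * Real.sin (2 * Real.pi * (k + 1) * x))

end

/-! ### Functions on the circle and their lifts -/

lemma coe_rep (z : Circle1) : ((rep z : ℝ) : Circle1) = z :=
  AddCircle.coe_equivIco

lemma rep_coe (x : ℝ) : rep (x : Circle1) = Int.fract x := by
  simp [rep]

lemma coe_eq_coe_iff {a b : ℝ} : (a : Circle1) = b ↔ ∃ n : ℤ, a - b = n := by
  rw [← Int.fract_eq_fract, ← rep_coe, ← rep_coe]
  exact ⟨congrArg rep, fun h => by rw [← coe_rep a, h, coe_rep]⟩

lemma coe_add_intCast (x : ℝ) (n : ℤ) : ((x + n : ℝ) : Circle1) = x :=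
  coe_eq_coe_iff.2 ⟨n, add_sub_cancel_left x n⟩

lemma coe_add_one (x : ℝ) : ((x + 1 : ℝ) : Circle1) = x := by
  exact_mod_cast coe_add_intCast x 1

lemma map_rep_coe_of_periodic {α : Type*} {h : ℝ → α} (hp : Function.Periodic h 1) (x : ℝ) :
    h (rep (x : Circle1)) = h x := by
  rw [rep_coe, ← Int.self_sub_floor]
  simpa using hp.sub_zsmul_eq (x := x) ⌊x⌋

lemma dist_coe_le (a b : ℝ) : dist (a : Circle1) b ≤ dist a b := by
  rw [dist_eq_norm, dist_eq_norm, ← AddCircle.coe_sub]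
  exact QuotientAddGroup.norm_mk_le_norm

lemma dist_coe_eq {a b : ℝ} (h : dist a b ≤ 1 / 2) : dist (a : Circle1) b = dist a b := by
  rw [dist_eq_norm, ← AddCircle.coe_sub]
  exact (AddCircle.norm_coe_eq_abs_iff 1 one_ne_zero).2 (by simpa [Real.dist_eq] using h)

lemma exists_coe_eq_and_dist_eq (a : ℝ) (w : Circle1) :
    ∃ b : ℝ, (b : Circle1) = w ∧ dist a b = dist (a : Circle1) w := by
  refine ⟨rep w + round (a - rep w), by rw [coe_add_intCast, coe_rep], ?_⟩
  have h : dist (a : Circle1) w = dist (a : Circle1) (rep w : Circle1) := by rw [coe_rep]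
  rw [h, dist_eq_norm (a : Circle1), ← AddCircle.coe_sub, AddCircle.norm_eq]
  simp [Real.dist_eq, sub_sub]

lemma continuous_of_comp_coe {α : Type*} [TopologicalSpace α] {u : Circle1 → α}
    (h : Continuous fun x : ℝ => u x) : Continuous u :=
  QuotientAddGroup.isOpenQuotientMap_mk.isQuotientMap.continuous_iff.2 h

lemma lipschitzWith_of_comp_coe {α : Type*} [PseudoMetricSpace α] {u : Circle1 → α} {K : NNReal}
    (h : LipschitzWith K fun x : ℝ => u x) : LipschitzWith K u := by
  refine .of_dist_le_mul fun z w => ?_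
  obtain ⟨b, rfl, hb⟩ := exists_coe_eq_and_dist_eq (rep z) w
  rw [coe_rep] at hb
  simpa only [coe_rep, hb] using h.dist_le_mul (rep z) b

lemma exists_forall_abs_le {X : Type*} [TopologicalSpace X] [CompactSpace X] {u : X → ℝ}
    (hu : Continuous u) : ∃ B, ∀ x, |u x| ≤ B := by
  obtain ⟨B, hB⟩ := isCompact_univ.exists_bound_of_continuousOn hu.continuousOn
  exact ⟨B, fun x => hB x (mem_univ x)⟩

/-- The function on the circle induced by the derivative of `G`, meaningful when
`G (x + 1) - G x` is constant. It serves both for the derivatives of the iterates of a circle map,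
given by lifts, and for those of a function `f` on the circle, as `circleDeriv fun x => f x`. -/
noncomputable def circleDeriv (G : ℝ → ℝ) (z : Circle1) : ℝ := deriv G (rep z)

section CircleDeriv
variable {G : ℝ → ℝ} {c : ℝ}

lemma periodic_deriv_of_map_add_one (hG : ∀ x, G (x + 1) = G x + c) :
    Function.Periodic (deriv G) 1 := fun x => by
  rw [← deriv_comp_add_const, show (fun x => G (x + 1)) = fun x => G x + c from funext hG]
  simp

lemma circleDeriv_coe (hG : ∀ x, G (x + 1) = G x + c) (x : ℝ) : circleDeriv G x = deriv G x :=
  map_rep_coe_of_periodic (periodic_deriv_of_map_add_one hG) x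

lemma circleDeriv_comp_coe (f : Circle1 → ℝ) (x : ℝ) :
    circleDeriv (fun x => f x) x = deriv (fun x : ℝ => f x) x :=
  circleDeriv_coe (c := 0) (fun x => by rw [coe_add_one, add_zero]) x

lemma contDiff_circleDeriv_coe (hG : ∀ x, G (x + 1) = G x + c) (hc : ContDiff ℝ 2 G) :
    ContDiff ℝ 1 fun x : ℝ => circleDeriv G x := by
  simp only [circleDeriv_coe hG]
  exact ((contDiff_succ_iff_deriv (n := 1)).1 (by rwa [one_add_one_eq_two])).2.2

lemma continuous_circleDeriv (hG : ∀ x, G (x + 1) = G x + c) (hc : ContDiff ℝ 1 G) :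
    Continuous (circleDeriv G) :=
  continuous_of_comp_coe (by simpa only [circleDeriv_coe hG] using hc.continuous_deriv le_rfl)

lemma continuous_circleDeriv_comp_coe {f : Circle1 → ℝ} (hf : ContDiff ℝ 1 fun x : ℝ => f x) :
    Continuous (circleDeriv fun x => f x) :=
  continuous_circleDeriv (c := 0) (fun x => by rw [coe_add_one, add_zero]) hf

lemma lipschitzWith_of_abs_circleDeriv_le {f : Circle1 → ℝ} {B : ℝ}
    (hf : Differentiable ℝ fun x : ℝ => f x) (hB : ∀ z, |circleDeriv (fun x => f x) z| ≤ B) :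
    LipschitzWith B.toNNReal f := by
  refine lipschitzWith_of_comp_coe (lipschitzWith_of_nnnorm_deriv_le hf fun x => ?_)
  rw [← circleDeriv_comp_coe]
  exact NNReal.le_toNNReal_of_coe_le (hB x)

lemma exists_lipschitzWith_of_contDiff {f : Circle1 → ℝ} (hf : ContDiff ℝ 1 fun x : ℝ => f x) :
    ∃ K, LipschitzWith K f := by
  obtain ⟨B, hB⟩ := exists_forall_abs_le (continuous_circleDeriv_comp_coe hf)
  exact ⟨_, lipschitzWith_of_abs_circleDeriv_le (hf.differentiable one_ne_zero) hB⟩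

lemma exists_lipschitzWith_circleDeriv {f : Circle1 → ℝ} (hf : ContDiff ℝ 2 fun x : ℝ => f x) :
    ∃ K, LipschitzWith K (circleDeriv fun x => f x) :=
  exists_lipschitzWith_of_contDiff <|
    contDiff_circleDeriv_coe (c := 0) (fun x => by rw [coe_add_one, add_zero]) hf

end CircleDeriv

/-! ### Backward orbits and Bowen balls -/

section Dynamics
variable {X : Type*} {T : X → X}

/-- The sequence `y 0, y 1, …` is a backward orbit of `T`, starting at `y 0`. -/
def IsBackwardOrbit (T : X → X) (y : ℕ → X) : Prop :=
  ∀ k, T (y (k + 1)) = y k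

namespace IsBackwardOrbit
variable {y z : ℕ → X}

lemma iterate_apply_add (hy : IsBackwardOrbit T y) (j k : ℕ) : T^[j] (y (k + j)) = y k := by
  induction j with
  | zero => rfl
  | succ j ih => rw [Function.iterate_succ_apply, ← add_assoc, hy, ih]

lemma iterate_apply_self (hy : IsBackwardOrbit T y) (n : ℕ) : T^[n] (y n) = y 0 := by
  simpa using hy.iterate_apply_add n 0

lemma ne_of_lt (hy : IsBackwardOrbit T y) {k m : ℕ} (hkm : k < m)
    (hper : y m ∉ Function.periodicPts T) : y k ≠ y m := by
  intro h
  obtain ⟨j, rfl⟩ := Nat.exists_eq_add_of_lt hkm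
  exact hper ⟨j + 1, j.succ_pos, (hy.iterate_apply_add (j + 1) k).trans h⟩

lemma one_ne_of_zero_eq (hy : IsBackwardOrbit T y) (hz : IsBackwardOrbit T z) (h₀ : y 0 = z 0)
    (h₁ : y 1 ≠ z 1) (hper : ∀ k, z k ∉ Function.periodicPts T) (k : ℕ) : y 1 ≠ z (k + 1) := by
  intro h
  rcases k.eq_zero_or_pos with rfl | hk
  · exact h₁ h
  · refine hz.ne_of_lt hk (hper k) ?_
    rw [← h₀, ← hz k, ← h, hy 0]

end IsBackwardOrbit

section Bowen
variable [PseudoMetricSpace X]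

/-- The points `x` and `y` are at distance less than `ρ` in the Bowen metric of order `n`: their
orbits stay `ρ`-close at the times `0, …, n - 1`. -/
def BowenClose (T : X → X) (ρ : ℝ) (n : ℕ) (x y : X) : Prop :=
  ∀ k < n, dist (T^[k] x) (T^[k] y) < ρ

lemma bowenClose_add_iff {ρ : ℝ} {m n : ℕ} {x y : X} :
    BowenClose T ρ (m + n) x y ↔
      BowenClose T ρ m x y ∧ BowenClose T ρ n (T^[m] x) (T^[m] y) := by
  refine ⟨fun h => ⟨fun k hk => h k (by omega), fun k hk => ?_⟩, fun ⟨h₁, h₂⟩ k hk => ?_⟩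
  · simpa only [Function.iterate_add_apply] using h (k + m) (by omega)
  · rcases lt_or_ge k m with hkm | hkm
    · exact h₁ k hkm
    · obtain ⟨j, rfl⟩ := Nat.exists_eq_add_of_le' hkm
      simpa only [Function.iterate_add_apply] using h₂ j (by omega)

lemma BowenClose.of_common_centre {ρ : ℝ} {n : ℕ} {x y e : X} (hx : BowenClose T (ρ / 2) n x e)
    (hy : BowenClose T (ρ / 2) n y e) : BowenClose T ρ n x y := fun k hk => by
  linarith [dist_triangle_right (T^[k] x) (T^[k] y) (T^[k] e), hx k hk, hy k hk]

lemma IsBackwardOrbit.bowenClose {y z : ℕ → X} (hy : IsBackwardOrbit T y) (hz : IsBackwardOrbit T z)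
    {ρ : ℝ} {k m n : ℕ} (h₀ : BowenClose T ρ m (y 0) (z 0)) (hₙ : BowenClose T ρ n (y n) (z n))
    (hk : k ≤ n) : BowenClose T ρ (k + m) (y k) (z k) := by
  have hseg : BowenClose T ρ (n + m) (y n) (z n) :=
    bowenClose_add_iff.2 ⟨hₙ, by rwa [hy.iterate_apply_self, hz.iterate_apply_self]⟩
  obtain ⟨i, rfl⟩ := Nat.exists_eq_add_of_le hk
  have htail := (bowenClose_add_iff (m := i) (n := k + m)).1 (by convert hseg using 1; omega)
  simpa only [hy.iterate_apply_add, hz.iterate_apply_add] using htail.2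

/-- A scale below which Bowen-close orbit segments separate exponentially. -/
structure IsExpansionScale (T : X → X) (C l ρ : ℝ) : Prop where
  scale_pos : 0 < ρ
  le_dist_iterate {n : ℕ} {x y : X} (h : BowenClose T ρ (n + 1) x y) :
    C * l ^ n * dist x y ≤ dist (T^[n] x) (T^[n] y)

namespace IsExpansionScale
variable {C l ρ : ℝ}

lemma dist_iterate_le (hρ : IsExpansionScale T C l ρ) (hC : 0 < C) (hl : 0 < l) {n j : ℕ}
    (hj : j ≤ n) {x y : X} (h : BowenClose T ρ (n + 1) x y) :
    dist (T^[j] x) (T^[j] y) ≤ C⁻¹ * l⁻¹ ^ (n - j) * dist (T^[n] x) (T^[n] y) := by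
  obtain ⟨i, rfl⟩ := Nat.exists_eq_add_of_le hj
  have hle := hρ.le_dist_iterate ((bowenClose_add_iff (m := j) (n := i + 1)).1 h).2
  rw [← Function.iterate_add_apply, ← Function.iterate_add_apply, add_comm i j] at hle
  rw [Nat.add_sub_cancel_left, inv_pow, ← mul_inv, ← div_eq_inv_mul]
  exact (le_div_iff₀' (by positivity)).2 hle

lemma dist_le (hρ : IsExpansionScale T C l ρ) (hC : 0 < C) (hl : 0 < l) {n : ℕ} {x y : X}
    (h : BowenClose T ρ (n + 1) x y) : dist x y ≤ C⁻¹ * l⁻¹ ^ n * ρ := by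
  refine (hρ.dist_iterate_le hC hl n.zero_le h).trans ?_
  rw [Nat.sub_zero]
  gcongr
  exact (h n n.lt_succ_self).le

end IsExpansionScale

lemma IsExpansionScale.eq_of_map_eq {X : Type*} [MetricSpace X] {T : X → X} {C l ρ : ℝ}
    (hρ : IsExpansionScale T C l ρ) (hC : 0 < C) (hl : 0 < l) {x y : X} (hT : T x = T y)
    (hd : dist x y < ρ) : x = y := by
  have hclose : BowenClose T ρ 2 x y := fun k hk => by
    interval_cases k
    · exact hd
    · simpa [hT] using hρ.scale_pos
  have hle := hρ.dist_iterate_le hC hl zero_le_one hclose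
  simpa [hT] using hle

end Bowen

end Dynamics

/-! ### Expanding lifts -/

lemma contDiff_iterate {E : Type*} [NormedAddCommGroup E] [NormedSpace ℝ E] {r : WithTop ℕ∞}
    {G : E → E} (hG : ContDiff ℝ r G) (n : ℕ) : ContDiff ℝ r G^[n] := by
  induction n with
  | zero => exact contDiff_id
  | succ n ih => exact ih.comp hG

/-- `F` is a lift of an orientation-preserving `C^2` expanding circle map of degree `d` with
expansion constants `C` and `l`. As the bound holds for `n = 0`, necessarily `C ≤ 1`. -/
structure IsExpandingLiftWith (F : ℝ → ℝ) (d : ℕ) (C l : ℝ) : Prop where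
  const_pos : 0 < C
  one_lt : 1 < l
  contDiff : ContDiff ℝ 2 F
  map_add_one (x : ℝ) : F (x + 1) = F x + d
  le_deriv_iterate (n : ℕ) (x : ℝ) : C * l ^ n ≤ deriv F^[n] x

lemma isExpandingLiftWith_of_monotone {F : ℝ → ℝ} {d : ℕ} {C l : ℝ} (hC : 0 < C) (hl : 1 < l)
    (hF : ContDiff ℝ 2 F) (hadd : ∀ x, F (x + 1) = F x + d) (hmono : Monotone F)
    (hexp : ∀ n : ℕ, 1 ≤ n → ∀ x : ℝ, C * l ^ n ≤ |deriv F^[n] x|) :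
    IsExpandingLiftWith F d (min C 1) l where
  const_pos := lt_min hC one_pos
  one_lt := hl
  contDiff := hF
  map_add_one := hadd
  le_deriv_iterate n x := by
    rcases n.eq_zero_or_pos with rfl | hn
    · simp
    · calc min C 1 * l ^ n ≤ C * l ^ n := by gcongr; exact min_le_left _ _
        _ ≤ |deriv F^[n] x| := hexp n hn x
        _ = deriv F^[n] x := abs_of_nonneg (hmono.iterate n).deriv_nonneg

namespace IsExpandingLiftWith
variable {F : ℝ → ℝ} {d : ℕ} {C l : ℝ} (hF : IsExpandingLiftWith F d C l)
include hF

lemma rate_pos : 0 < l := one_pos.trans hF.one_lt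

lemma inv_rate_pos : 0 < l⁻¹ := inv_pos.2 hF.rate_pos

lemma const_mul_pow_pos (n : ℕ) : 0 < C * l ^ n :=
  mul_pos hF.const_pos (pow_pos hF.rate_pos n)

lemma differentiable_iterate (n : ℕ) : Differentiable ℝ F^[n] :=
  (contDiff_iterate hF.contDiff n).differentiable two_ne_zero

lemma differentiable : Differentiable ℝ F := hF.differentiable_iterate 1

lemma deriv_pos (x : ℝ) : 0 < deriv F x :=
  (hF.const_mul_pow_pos 1).trans_le (hF.le_deriv_iterate 1 x)

lemma strictMono : StrictMono F := strictMono_of_deriv_pos hF.deriv_pos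

lemma const_mul_pow_mul_dist_le (n : ℕ) (a b : ℝ) :
    C * l ^ n * dist a b ≤ dist (F^[n] a) (F^[n] b) := by
  wlog hab : b ≤ a generalizing a b
  · simpa only [dist_comm] using this b a (le_of_not_ge hab)
  have hle := mul_sub_le_image_sub_of_le_deriv (hF.differentiable_iterate n)
    (hF.le_deriv_iterate n) hab
  rw [Real.dist_eq, abs_of_nonneg (sub_nonneg.2 hab)]
  exact hle.trans (le_abs_self _)

lemma surjective : Function.Surjective F := by
  have hCl := hF.const_mul_pow_pos 1
  have hgrow : ∀ ⦃x y : ℝ⦄, x ≤ y → C * l ^ 1 * (y - x) ≤ F y - F x :=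
    mul_sub_le_image_sub_of_le_deriv hF.differentiable (hF.le_deriv_iterate 1)
  refine hF.differentiable.continuous.surjective ?_ ?_
  · refine tendsto_atTop_mono' _ ?_ (tendsto_atTop_add_const_right _ (F 0)
      (tendsto_id.const_mul_atTop hCl))
    filter_upwards [eventually_ge_atTop 0] with x hx
    simpa [sub_zero, le_sub_iff_add_le] using hgrow hx
  · refine tendsto_atBot_mono' _ ?_ (tendsto_atBot_add_const_right _ (F 0)
      (tendsto_id.const_mul_atBot hCl))
    filter_upwards [eventually_le_atBot 0] with x hx
    have hle := hgrow hx
    rw [zero_sub, mul_neg] at hle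
    simpa using (by linarith : F x ≤ C * l ^ 1 * x + F 0)

lemma map_add_intCast (x : ℝ) (k : ℤ) : F (x + k) = F x + d * k := by
  simpa [mul_comm] using
    AddConstMapClass.map_add_int' (⟨F, hF.map_add_one⟩ : AddConstMap ℝ ℝ 1 (d : ℝ)) x k

lemma map_iterate_add_one (n : ℕ) (x : ℝ) : F^[n] (x + 1) = F^[n] x + (d ^ n : ℕ) := by
  induction n with
  | zero => simp
  | succ n ih =>
    rw [Function.iterate_succ_apply', ih, Function.iterate_succ_apply']
    simpa [pow_succ'] using hF.map_add_intCast (F^[n] x) (d ^ n : ℕ)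

lemma cmap_coe (x : ℝ) : cmap F (x : Circle1) = (F x : Circle1) :=
  map_rep_coe_of_periodic (h := fun x => (F x : Circle1))
    (fun x => by
      simp only [hF.map_add_one]
      exact_mod_cast coe_add_intCast (F x) d) x

lemma cmap_iterate_coe (n : ℕ) (x : ℝ) : (cmap F)^[n] (x : Circle1) = (F^[n] x : Circle1) :=
  (Function.Semiconj.iterate_right (fun x => (hF.cmap_coe x).symm) n x).symm

lemma continuous_cmap : Continuous (cmap F) :=
  continuous_of_comp_coe (by
    simp only [hF.cmap_coe]
    exact (AddCircle.continuous_mk' 1).comp hF.differentiable.continuous)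

lemma exists_lipschitzWith : ∃ M, LipschitzWith M F := by
  obtain ⟨M, hM⟩ := exists_forall_abs_le
    (continuous_circleDeriv hF.map_add_one (hF.contDiff.of_le one_le_two))
  refine ⟨M.toNNReal, lipschitzWith_of_nnnorm_deriv_le hF.differentiable fun x => ?_⟩
  rw [← circleDeriv_coe hF.map_add_one]
  exact NNReal.le_toNNReal_of_coe_le (hM x)

/-- At this scale one step of `F` cannot move lifts of nearby points further apart than `1 / 2`. -/
lemma dist_iterate_eq_of_bowenClose {M : NNReal} (hM : LipschitzWith M F) {a b : ℝ}
    (hab : dist a b = dist (a : Circle1) b) {n : ℕ}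
    (h : BowenClose (cmap F) (1 / (2 * (M + 1))) n (a : Circle1) b) :
    dist (F^[n] a) (F^[n] b) = dist ((cmap F)^[n] (a : Circle1)) ((cmap F)^[n] (b : Circle1)) := by
  induction n with
  | zero => exact hab
  | succ n ih =>
    have hn := ih fun k hk => h k (by omega)
    have hstep : M * dist (F^[n] a) (F^[n] b) ≤ 1 / 2 := by
      calc M * dist (F^[n] a) (F^[n] b) ≤ M * (1 / (2 * (M + 1))) := by
            rw [hn]; gcongr; exact (h n n.lt_succ_self).le
        _ ≤ 1 / 2 := by
            rw [mul_one_div, div_le_div_iff₀ (by positivity) two_pos]; linarith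
    rw [hF.cmap_iterate_coe, hF.cmap_iterate_coe, dist_coe_eq]
    rw [Function.iterate_succ_apply', Function.iterate_succ_apply']
    exact (hM.dist_le_mul _ _).trans hstep

lemma exists_isExpansionScale : ∃ ρ, IsExpansionScale (cmap F) C l ρ := by
  obtain ⟨M, hM⟩ := hF.exists_lipschitzWith
  refine ⟨1 / (2 * (M + 1)), by positivity, fun {n y y'} h => ?_⟩
  obtain ⟨a, rfl⟩ : ∃ a : ℝ, (a : Circle1) = y := ⟨rep y, coe_rep y⟩
  obtain ⟨b, rfl, hab⟩ := exists_coe_eq_and_dist_eq a y'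
  rw [← hab, ← hF.dist_iterate_eq_of_bowenClose hM hab fun k hk => h k (by omega)]
  exact hF.const_mul_pow_mul_dist_le n a b

lemma exists_preimage_dist_le (n : ℕ) (y x : Circle1) : ∃ y', (cmap F)^[n] y' = x ∧
    ∀ j ≤ n, dist ((cmap F)^[j] y) ((cmap F)^[j] y') ≤
      C⁻¹ * l⁻¹ ^ (n - j) * dist ((cmap F)^[n] y) x := by
  obtain ⟨a, rfl⟩ : ∃ a : ℝ, (a : Circle1) = y := ⟨rep y, coe_rep y⟩
  obtain ⟨b, rfl, hb⟩ := exists_coe_eq_and_dist_eq (F^[n] a) x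
  obtain ⟨c, rfl⟩ := hF.surjective.iterate n b
  refine ⟨c, hF.cmap_iterate_coe n c, fun j hj => ?_⟩
  have hexp := hF.const_mul_pow_mul_dist_le (n - j) (F^[j] a) (F^[j] c)
  rw [← Function.iterate_add_apply, ← Function.iterate_add_apply, Nat.sub_add_cancel hj, hb] at hexp
  have := hF.const_pos
  have := hF.rate_pos
  simp only [hF.cmap_iterate_coe]
  refine (dist_coe_le _ _).trans ?_
  rw [inv_pow, ← mul_inv, ← div_eq_inv_mul]
  exact (le_div_iff₀' (by positivity)).2 hexp

end IsExpandingLiftWith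

/-! ### Geometric series in `l⁻¹` -/

section Geometric
variable {l : ℝ} (hl : 1 < l)
include hl

lemma hasSum_inv_pow_succ : HasSum (fun k : ℕ => l⁻¹ ^ (k + 1)) (l - 1)⁻¹ := by
  have hl₀ : 0 < l := one_pos.trans hl
  have h := (hasSum_geometric_of_lt_one (inv_nonneg.2 hl₀.le) (inv_lt_one_of_one_lt₀ hl)).mul_left
    l⁻¹
  rw [← mul_inv, mul_sub, mul_one, mul_inv_cancel₀ hl₀.ne'] at h
  simpa only [pow_succ'] using h

lemma sum_range_inv_pow_succ_le (n : ℕ) : ∑ k ∈ Finset.range n, l⁻¹ ^ (k + 1) ≤ (l - 1)⁻¹ :=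
  sum_le_hasSum _ (fun _ _ => by positivity) (hasSum_inv_pow_succ hl)

lemma sum_range_inv_pow_sub_le (n : ℕ) : ∑ j ∈ Finset.range n, l⁻¹ ^ (n - j) ≤ (l - 1)⁻¹ := by
  rw [← Finset.sum_range_reflect]
  refine le_trans (Finset.sum_le_sum fun j hj => le_of_eq ?_) (sum_range_inv_pow_succ_le hl n)
  have := Finset.mem_range.1 hj
  congr 1
  omega

lemma summable_of_abs_le_inv_pow_succ {a : ℕ → ℝ} {Q : ℝ} (h : ∀ k, |a k| ≤ Q * l⁻¹ ^ (k + 1)) :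
    Summable a :=
  .of_norm_bounded ((hasSum_inv_pow_succ hl).summable.mul_left Q) h

lemma abs_tsum_le_of_abs_le_inv_pow_succ {a : ℕ → ℝ} {P Q : ℝ} (hP : 0 ≤ P) {n : ℕ}
    (hhead : ∀ k < n, |a k| ≤ P * l⁻¹ ^ (k + 1)) (hall : ∀ k, |a k| ≤ Q * l⁻¹ ^ (k + 1)) :
    |∑' k, a k| ≤ (P + Q * l⁻¹ ^ n) * (l - 1)⁻¹ := by
  rw [← (summable_of_abs_le_inv_pow_succ hl hall).sum_add_tsum_nat_add n, add_mul]
  refine (abs_add_le _ _).trans (add_le_add ?_ ?_)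
  · calc |∑ k ∈ Finset.range n, a k| ≤ ∑ k ∈ Finset.range n, P * l⁻¹ ^ (k + 1) :=
          (Finset.abs_sum_le_sum_abs _ _).trans
            (Finset.sum_le_sum fun k hk => hhead k (Finset.mem_range.1 hk))
      _ ≤ P * (l - 1)⁻¹ := by
          rw [← Finset.mul_sum]
          exact mul_le_mul_of_nonneg_left (sum_range_inv_pow_succ_le hl n) hP
  · rw [← Real.norm_eq_abs]
    refine tsum_of_norm_bounded ((hasSum_inv_pow_succ hl).mul_left (Q * l⁻¹ ^ n)) fun k => ?_
    exact (hall (k + n)).trans_eq (by ring)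

lemma dist_birkhoffSum_le {X : Type*} [PseudoMetricSpace X] {T : X → X} {f : X → ℝ} {K : NNReal}
    (hf : LipschitzWith K f) {A : ℝ} (hA : 0 ≤ A) {n : ℕ} {x y : X}
    (h : ∀ j ≤ n, dist (T^[j] x) (T^[j] y) ≤ A * l⁻¹ ^ (n - j)) :
    dist (birkhoffSum T f n x) (birkhoffSum T f n y) ≤ K * A * (l - 1)⁻¹ :=
  calc _ ≤ ∑ j ∈ Finset.range n, dist (f (T^[j] x)) (f (T^[j] y)) :=
        dist_birkhoffSum_birkhoffSum_le _ _ _ _ _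
    _ ≤ ∑ j ∈ Finset.range n, K * A * l⁻¹ ^ (n - j) := Finset.sum_le_sum fun j hj => by
        refine (hf.dist_le_mul _ _).trans ?_
        rw [mul_assoc]
        gcongr
        exact h j (Finset.mem_range.1 hj).le
    _ ≤ K * A * (l - 1)⁻¹ := by
        rw [← Finset.mul_sum]
        gcongr
        exact sum_range_inv_pow_sub_le hl n

end Geometric

lemma abs_inv_sub_inv_le_of_abs_log_sub_le {a b m δ : ℝ} (hm : 0 < m) (ha : m ≤ a) (hb : m ≤ b)
    (h : |Real.log a - Real.log b| ≤ δ) : |a⁻¹ - b⁻¹| ≤ m⁻¹ * δ := by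
  wlog hab : a ≤ b generalizing a b
  · rw [abs_sub_comm]
    exact this hb ha (by rwa [abs_sub_comm]) (le_of_not_ge hab)
  have ha₀ : 0 < a := hm.trans_le ha
  have hb₀ : 0 < b := hm.trans_le hb
  have hlog := Real.one_sub_inv_le_log_of_pos (div_pos hb₀ ha₀)
  rw [Real.log_div hb₀.ne' ha₀.ne', inv_div] at hlog
  rw [abs_of_nonneg (sub_nonneg.2 (inv_anti₀ ha₀ hab))]
  calc a⁻¹ - b⁻¹ = a⁻¹ * (1 - a / b) := by field_simp
    _ ≤ m⁻¹ * δ := by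
        gcongr
        · exact sub_nonneg.2 ((div_le_one hb₀).2 hab)
        · linarith [(abs_le.1 h).1]

/-! ### The derivative of `h^f_i` as a sum over a backward orbit -/

/-- For a backward orbit `y 0, y 1, …` of the circle map `T` induced by `F` and `u = f'`, this is
`∑_{k ≥ 1} f'(y_k) / (T^k)'(y_k)`, the derivative at `y 0` of `h^f_i` for the word `i` coding the
backward orbit. -/
noncomputable def backwardSum (F : ℝ → ℝ) (u : Circle1 → ℝ) (y : ℕ → Circle1) : ℝ :=
  ∑' k : ℕ, u (y (k + 1)) / circleDeriv F^[k + 1] (y (k + 1))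

namespace IsExpandingLiftWith
variable {F : ℝ → ℝ} {d : ℕ} {C l : ℝ} (hF : IsExpandingLiftWith F d C l)
include hF

lemma circleDeriv_iterate_coe (n : ℕ) (x : ℝ) : circleDeriv F^[n] x = deriv F^[n] x :=
  circleDeriv_coe (hF.map_iterate_add_one n) x

lemma le_circleDeriv_iterate (n : ℕ) (z : Circle1) : C * l ^ n ≤ circleDeriv F^[n] z :=
  hF.le_deriv_iterate n (rep z)

lemma circleDeriv_iterate_pos (n : ℕ) (z : Circle1) : 0 < circleDeriv F^[n] z :=
  (hF.const_mul_pow_pos n).trans_le (hF.le_circleDeriv_iterate n z)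

lemma inv_circleDeriv_iterate_le (n : ℕ) (z : Circle1) :
    (circleDeriv F^[n] z)⁻¹ ≤ C⁻¹ * l⁻¹ ^ n := by
  rw [inv_pow, ← mul_inv]
  exact inv_anti₀ (hF.const_mul_pow_pos n) (hF.le_circleDeriv_iterate n z)

lemma continuous_circleDeriv_iterate (n : ℕ) : Continuous (circleDeriv F^[n]) :=
  continuous_circleDeriv (hF.map_iterate_add_one n)
    ((contDiff_iterate hF.contDiff n).of_le one_le_two)

lemma circleDeriv_pos (z : Circle1) : 0 < circleDeriv F z := hF.deriv_pos (rep z)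

lemma circleDeriv_iterate_succ (n : ℕ) (z : Circle1) :
    circleDeriv F^[n + 1] z = circleDeriv F^[n] (cmap F z) * circleDeriv F z := by
  obtain ⟨x, rfl⟩ : ∃ x : ℝ, (x : Circle1) = z := ⟨rep z, coe_rep z⟩
  rw [hF.cmap_coe, hF.circleDeriv_iterate_coe, hF.circleDeriv_iterate_coe,
    circleDeriv_coe hF.map_add_one, Function.iterate_succ]
  exact deriv_comp x (hF.differentiable_iterate n _) (hF.differentiable x)

lemma log_circleDeriv_iterate (n : ℕ) (z : Circle1) : Real.log (circleDeriv F^[n] z) =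
    birkhoffSum (cmap F) (fun w => Real.log (circleDeriv F w)) n z := by
  induction n generalizing z with
  | zero =>
    have h : circleDeriv F^[0] z = 1 := deriv_id _
    rw [h, Real.log_one, birkhoffSum_zero]
  | succ n ih =>
    rw [hF.circleDeriv_iterate_succ, Real.log_mul (hF.circleDeriv_iterate_pos n _).ne'
      (hF.circleDeriv_pos z).ne', ih, birkhoffSum_succ', add_comm]

lemma exists_lipschitzWith_log_circleDeriv :
    ∃ K, LipschitzWith K fun z => Real.log (circleDeriv F z) :=
  exists_lipschitzWith_of_contDiff <|
    (contDiff_circleDeriv_coe hF.map_add_one hF.contDiff).log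
      fun _ => (hF.circleDeriv_pos _).ne'

section Distortion
variable {ρ : ℝ} (hρ : IsExpansionScale (cmap F) C l ρ)
include hρ

lemma exists_abs_log_circleDeriv_sub_le : ∃ A, 0 ≤ A ∧ ∀ k y y',
    BowenClose (cmap F) ρ (k + 1) y y' →
    |Real.log (circleDeriv F^[k] y) - Real.log (circleDeriv F^[k] y')| ≤
      A * dist ((cmap F)^[k] y) ((cmap F)^[k] y') := by
  obtain ⟨K, hK⟩ := hF.exists_lipschitzWith_log_circleDeriv
  have hC := hF.const_pos
  have hl := sub_pos.2 hF.one_lt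
  refine ⟨K * C⁻¹ * (l - 1)⁻¹, by positivity, fun k y y' h => ?_⟩
  rw [hF.log_circleDeriv_iterate, hF.log_circleDeriv_iterate]
  refine (dist_birkhoffSum_le hF.one_lt hK (A := C⁻¹ * dist ((cmap F)^[k] y) ((cmap F)^[k] y'))
    (by positivity) fun j hj => ?_).trans_eq (by ring)
  exact (hρ.dist_iterate_le hC hF.rate_pos hj h).trans_eq (by ring)

lemma exists_abs_div_circleDeriv_sub_le {u : Circle1 → ℝ} {K : NNReal} (hu : LipschitzWith K u) :
    ∃ A, 0 ≤ A ∧ ∀ k y y', BowenClose (cmap F) ρ (k + 1) y y' →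
      |u y / circleDeriv F^[k] y - u y' / circleDeriv F^[k] y'| ≤
        A * dist ((cmap F)^[k] y) ((cmap F)^[k] y') * l⁻¹ ^ k := by
  obtain ⟨A, hA, hlog⟩ := hF.exists_abs_log_circleDeriv_sub_le hρ
  obtain ⟨B, hB⟩ := exists_forall_abs_le hu.continuous
  have hB₀ : 0 ≤ B := (abs_nonneg _).trans (hB 0)
  have hC := hF.const_pos
  have hl := hF.inv_rate_pos
  refine ⟨C⁻¹ * (K * C⁻¹ + B * A), by positivity, fun k y y' h => ?_⟩
  set D := dist ((cmap F)^[k] y) ((cmap F)^[k] y')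
  have hdist : dist y y' ≤ C⁻¹ * D := by
    refine (hρ.dist_iterate_le hC hF.rate_pos k.zero_le h).trans ?_
    have hpow : l⁻¹ ^ (k - 0) ≤ 1 := pow_le_one₀ hl.le (inv_le_one_of_one_le₀ hF.one_lt.le)
    gcongr
    exact mul_le_of_le_one_right (by positivity) hpow
  have hinv := abs_inv_sub_inv_le_of_abs_log_sub_le (hF.const_mul_pow_pos k)
    (hF.le_circleDeriv_iterate k y) (hF.le_circleDeriv_iterate k y') (hlog k y y' h)
  rw [mul_inv, ← inv_pow] at hinv
  calc _ = |(u y - u y') * (circleDeriv F^[k] y)⁻¹ +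
          u y' * ((circleDeriv F^[k] y)⁻¹ - (circleDeriv F^[k] y')⁻¹)| := by
        congr 1; ring
    _ ≤ |u y - u y'| * (circleDeriv F^[k] y)⁻¹ +
          |u y'| * |(circleDeriv F^[k] y)⁻¹ - (circleDeriv F^[k] y')⁻¹| := by
        refine (abs_add_le _ _).trans_eq ?_
        rw [abs_mul, abs_mul, abs_of_pos (inv_pos.2 (hF.circleDeriv_iterate_pos k y))]
    _ ≤ K * (C⁻¹ * D) * (C⁻¹ * l⁻¹ ^ k) + B * (C⁻¹ * l⁻¹ ^ k * (A * D)) := by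
        have hderiv := (inv_pos.2 (hF.circleDeriv_iterate_pos k y)).le
        gcongr
        · exact (hu.dist_le_mul y y').trans (by gcongr)
        · exact hF.inv_circleDeriv_iterate_le k y
        · exact hB y'
    _ = _ := by ring

end Distortion

lemma abs_div_circleDeriv_iterate_le {u : Circle1 → ℝ} {B : ℝ} {z : Circle1} (hB : |u z| ≤ B)
    (k : ℕ) : |u z / circleDeriv F^[k] z| ≤ B * C⁻¹ * l⁻¹ ^ k := by
  have hpos := inv_pos.2 (hF.circleDeriv_iterate_pos k z)
  rw [div_eq_mul_inv, abs_mul, abs_of_pos hpos, mul_assoc]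
  exact mul_le_mul hB (hF.inv_circleDeriv_iterate_le k z) hpos.le ((abs_nonneg _).trans hB)

lemma summable_backwardSum {u : Circle1 → ℝ} (hu : Continuous u) (y : ℕ → Circle1) :
    Summable fun k : ℕ => u (y (k + 1)) / circleDeriv F^[k + 1] (y (k + 1)) := by
  obtain ⟨B, hB⟩ := exists_forall_abs_le hu
  exact summable_of_abs_le_inv_pow_succ hF.one_lt fun k =>
    hF.abs_div_circleDeriv_iterate_le (hB _) (k + 1)

lemma continuous_backwardSum {u : Circle1 → ℝ} (hu : Continuous u) :
    Continuous (backwardSum F u) := by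
  obtain ⟨B, hB⟩ := exists_forall_abs_le hu
  refine continuous_tsum (fun k => ?_) ((hasSum_inv_pow_succ hF.one_lt).summable.mul_left (B * C⁻¹))
    fun k y => hF.abs_div_circleDeriv_iterate_le (hB _) (k + 1)
  exact (hu.comp (continuous_apply (k + 1))).div
    ((hF.continuous_circleDeriv_iterate (k + 1)).comp (continuous_apply (k + 1)))
    fun y => (hF.circleDeriv_iterate_pos _ _).ne'

lemma tendsto_backwardSum {ι : Type*} {p : Filter ι} {u : ι → Circle1 → ℝ} {u₀ : Circle1 → ℝ}
    {B : ℝ} (hB : ∀ᶠ i in p, ∀ z, |u i z| ≤ B) (hu : ∀ z, Tendsto (fun i => u i z) p (𝓝 (u₀ z)))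
    (y : ℕ → Circle1) :
    Tendsto (fun i => backwardSum F (u i) y) p (𝓝 (backwardSum F u₀ y)) :=
  tendsto_tsum_of_dominated_convergence
    ((hasSum_inv_pow_succ hF.one_lt).summable.mul_left (B * C⁻¹))
    (fun k => (hu (y (k + 1))).div_const _)
    (hB.mono fun _ hi k => hF.abs_div_circleDeriv_iterate_le (hi _) (k + 1))

lemma backwardSum_add_sum_mul {ι : Type*} [Fintype ι] {u : Circle1 → ℝ} {v : ι → Circle1 → ℝ}
    (hu : Continuous u) (hv : ∀ j, Continuous (v j)) (t : ι → ℝ) (y : ℕ → Circle1) :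
    backwardSum F (fun z => u z + ∑ j, t j * v j z) y =
      backwardSum F u y + ∑ j, t j * backwardSum F (v j) y := by
  refine HasSum.tsum_eq ?_
  simp only [add_div, Finset.sum_div, mul_div_assoc]
  exact (hF.summable_backwardSum hu y).hasSum.add
    (hasSum_sum fun j _ => (hF.summable_backwardSum (hv j) y).hasSum.mul_left (t j))

/-- The first `n` terms are compared by bounded distortion, the others by their size. -/
lemma exists_abs_backwardSum_sub_le {ρ : ℝ} (hρ : IsExpansionScale (cmap F) C l ρ)
    {u : Circle1 → ℝ} {K : NNReal} (hu : LipschitzWith K u) :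
    ∃ A, ∀ n, 1 ≤ n → ∀ y y' : ℕ → Circle1,
      IsBackwardOrbit (cmap F) y → IsBackwardOrbit (cmap F) y' →
      BowenClose (cmap F) ρ n (y 0) (y' 0) → BowenClose (cmap F) ρ n (y n) (y' n) →
      |backwardSum F u y - backwardSum F u y'| ≤ A * l⁻¹ ^ n := by
  obtain ⟨A, hA, hterm⟩ := hF.exists_abs_div_circleDeriv_sub_le hρ hu
  obtain ⟨B, hB⟩ := exists_forall_abs_le hu.continuous
  refine ⟨(A * (ρ * C⁻¹ * l) + 2 * B * C⁻¹) * (l - 1)⁻¹, fun n hn y y' hy hy' h₀ hₙ => ?_⟩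
  have hdist : dist (y 0) (y' 0) ≤ ρ * C⁻¹ * l * l⁻¹ ^ n := by
    obtain ⟨m, rfl⟩ := Nat.exists_eq_add_of_le' hn
    refine (hρ.dist_le hF.const_pos hF.rate_pos h₀).trans_eq ?_
    rw [pow_succ, mul_assoc _ l, mul_left_comm l, mul_inv_cancel₀ hF.rate_pos.ne']
    ring
  have hhead : ∀ k < n, |u (y (k + 1)) / circleDeriv F^[k + 1] (y (k + 1)) -
      u (y' (k + 1)) / circleDeriv F^[k + 1] (y' (k + 1))| ≤
      A * dist (y 0) (y' 0) * l⁻¹ ^ (k + 1) := fun k hk => by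
    have hclose := hy.bowenClose hy' h₀ hₙ (Nat.succ_le_of_lt hk)
    simpa only [hy.iterate_apply_self, hy'.iterate_apply_self] using
      hterm (k + 1) _ _ fun j hj => hclose j (by omega)
  have hall : ∀ k, |u (y (k + 1)) / circleDeriv F^[k + 1] (y (k + 1)) -
      u (y' (k + 1)) / circleDeriv F^[k + 1] (y' (k + 1))| ≤
      2 * B * C⁻¹ * l⁻¹ ^ (k + 1) := fun k => by
    refine (abs_sub _ _).trans ((add_le_add (hF.abs_div_circleDeriv_iterate_le (hB _) (k + 1))
      (hF.abs_div_circleDeriv_iterate_le (hB _) (k + 1))).trans_eq (by ring))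
  have hl := sub_pos.2 hF.one_lt
  rw [backwardSum, backwardSum, ← (hF.summable_backwardSum hu.continuous y).tsum_sub
    (hF.summable_backwardSum hu.continuous y')]
  calc _ ≤ (A * dist (y 0) (y' 0) + 2 * B * C⁻¹ * l⁻¹ ^ n) * (l - 1)⁻¹ :=
        abs_tsum_le_of_abs_le_inv_pow_succ hF.one_lt (by positivity) hhead hall
    _ ≤ (A * (ρ * C⁻¹ * l * l⁻¹ ^ n) + 2 * B * C⁻¹ * l⁻¹ ^ n) * (l - 1)⁻¹ := by gcongr
    _ = _ := by ring

end IsExpandingLiftWith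

/-! ### Inverse branches and supercritical values -/

namespace IsExpandingLiftWith
variable {F : ℝ → ℝ} {d : ℕ} {C l : ℝ} (hF : IsExpandingLiftWith F d C l)
include hF

lemma apply_invFun (x : ℝ) : F (Function.invFun F x) = x :=
  Function.rightInverse_invFun hF.surjective x

lemma hasDerivAt_invFun (x : ℝ) :
    HasDerivAt (Function.invFun F) (deriv F (Function.invFun F x))⁻¹ x := by
  have hmono : StrictMono (Function.invFun F) := fun a b hab => by
    rwa [← hF.strictMono.lt_iff_lt, hF.apply_invFun, hF.apply_invFun]
  have hcont : Continuous (Function.invFun F) := hmono.monotone.continuous_of_surjective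
    (Function.invFun_surjective hF.strictMono.injective)
  exact HasDerivAt.of_local_left_inverse hcont.continuousAt (hF.differentiable _).hasDerivAt
    (hF.deriv_pos _).ne' (Eventually.of_forall hF.apply_invFun)

lemma isBackwardOrbit_tauIter (i : ℕ → Fin d) (x : ℝ) :
    IsBackwardOrbit (cmap F) fun k => (tauIter F i k x : Circle1) := fun k => by
  rw [hF.cmap_coe, tauIter, hF.apply_invFun]
  exact_mod_cast coe_add_intCast (tauIter F i k x) (i k : ℕ)

lemma hasDerivAt_tauIter (i : ℕ → Fin d) (n : ℕ) (x : ℝ) :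
    HasDerivAt (tauIter F i n) (circleDeriv F^[n] (tauIter F i n x))⁻¹ x := by
  induction n with
  | zero =>
    have h : HasDerivAt (tauIter F i 0) 1 x := hasDerivAt_id' x
    simpa [circleDeriv] using h
  | succ n ih =>
    rw [hF.circleDeriv_iterate_succ, hF.isBackwardOrbit_tauIter i x n, mul_comm, mul_inv,
      circleDeriv_coe hF.map_add_one]
    exact (hF.hasDerivAt_invFun _).comp x (ih.add_const _)

lemma deriv_hSum (i : ℕ → Fin d) {f : Circle1 → ℝ} (hf : ContDiff ℝ 1 fun x : ℝ => f x) (x : ℝ) :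
    deriv (hSum F i f) x = backwardSum F (circleDeriv fun x => f x) fun k => tauIter F i k x := by
  obtain ⟨B, hB⟩ := exists_forall_abs_le (continuous_circleDeriv_comp_coe hf)
  have hderiv (n : ℕ) (y : ℝ) : HasDerivAt
      (fun x => f (tauIter F i (n + 1) x) - f (tauIter F i (n + 1) 0))
      (circleDeriv (fun x => f x) (tauIter F i (n + 1) y) /
        circleDeriv F^[n + 1] (tauIter F i (n + 1) y)) y := by
    rw [circleDeriv_comp_coe, div_eq_mul_inv]
    exact ((hf.differentiable one_ne_zero _).hasDerivAt.comp y
      (hF.hasDerivAt_tauIter i (n + 1) y)).sub_const _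
  exact (hasDerivAt_tsum ((hasSum_inv_pow_succ hF.one_lt).summable.mul_left (B * C⁻¹)) hderiv
    (fun n y => hF.abs_div_circleDeriv_iterate_le (hB _) (n + 1)) (y₀ := 0)
    (by simp [summable_zero]) x).deriv

lemma coe_tauIter_one_ne {i j : ℕ → Fin d} (h : i 0 ≠ j 0) (x : ℝ) :
    (tauIter F i 1 x : Circle1) ≠ tauIter F j 1 x := fun he => by
  obtain ⟨k, hk⟩ := coe_eq_coe_iff.1 he
  have hval : ∀ i : ℕ → Fin d, F (tauIter F i 1 x) = x + (i 0 : ℕ) := fun i => hF.apply_invFun _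
  have hshift := hF.map_add_intCast (tauIter F j 1 x) k
  rw [show tauIter F j 1 x + k = tauIter F i 1 x by rw [← hk, add_sub_cancel], hval, hval,
    add_assoc, add_right_inj] at hshift
  have hdvd : ((i 0 : ℕ) : ℤ) - (j 0 : ℕ) = d * k := by
    rw [sub_eq_iff_eq_add']; exact_mod_cast hshift
  have hzero := Int.eq_zero_of_abs_lt_dvd ⟨k, hdvd⟩ (abs_lt.2 ⟨by omega, by omega⟩)
  exact h (Fin.ext (by omega))

end IsExpandingLiftWith

/-- The pairs of backward orbits in `N` starting at the same point whose first preimages are at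
distance at least `ρ`. -/
def separatedPairs {X : Type*} [PseudoMetricSpace X] (T : X → X) (ρ : ℝ) (N : Set X) :
    Set ((ℕ → X) × (ℕ → X)) :=
  {p | IsBackwardOrbit T p.1 ∧ IsBackwardOrbit T p.2 ∧ (∀ k, p.1 k ∈ N) ∧ (∀ k, p.2 k ∈ N) ∧
    p.1 0 = p.2 0 ∧ ρ ≤ dist (p.1 1) (p.2 1)}

lemma separatedPairs_mono {X : Type*} [PseudoMetricSpace X] {T : X → X} {ρ : ℝ} {M N : Set X}
    (h : M ⊆ N) : separatedPairs T ρ M ⊆ separatedPairs T ρ N :=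
  fun _ hp => ⟨hp.1, hp.2.1, fun k => h (hp.2.2.1 k), fun k => h (hp.2.2.2.1 k), hp.2.2.2.2⟩

lemma IsExpandingLiftWith.exists_separatedPairs_of_isSupercriticalValue {F : ℝ → ℝ} {d : ℕ}
    {C l ρ : ℝ} (hF : IsExpandingLiftWith F d C l) (hρ : IsExpansionScale (cmap F) C l ρ)
    {g : Circle1 → ℝ} (hg : ContDiff ℝ 1 fun x : ℝ => g x) {K : Set Circle1} {x : ℝ}
    (hx : IsSupercriticalValue F d g K x) :
    ∃ p ∈ separatedPairs (cmap F) ρ K, backwardSum F (circleDeriv fun x => g x) p.1 =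
      backwardSum F (circleDeriv fun x => g x) p.2 := by
  obtain ⟨hxK, i, j, hi, hj, hij, hd⟩ := hx
  rw [hF.deriv_hSum i hg, hF.deriv_hSum j hg] at hd
  have hmem : ∀ {i : ℕ → Fin d}, WordIn F i x K → ∀ k, (tauIter F i k x : Circle1) ∈ K :=
    fun hi k => k.eq_zero_or_pos.elim (fun h => by rwa [h]) (hi k)
  have hback := fun i => hF.isBackwardOrbit_tauIter i x
  refine ⟨(_, _), ⟨hback i, hback j, hmem hi, hmem hj, rfl, not_lt.1 fun hlt => ?_⟩, hd⟩
  exact hF.coe_tauIter_one_ne hij x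
    (hρ.eq_of_map_eq hF.const_pos hF.rate_pos ((hback i 0).trans (hback j 0).symm) hlt)

/-! ### Sub-actions and their limits -/

lemma InvProb.integrable {T : Circle1 → Circle1} {μ : Measure Circle1} (hμ : InvProb T μ)
    {f : Circle1 → ℝ} (hf : Continuous f) : Integrable f μ := by
  have := hμ.1
  obtain ⟨B, hB⟩ := exists_forall_abs_le hf
  exact .of_bound hf.aestronglyMeasurable B (Eventually.of_forall hB)

lemma InvProb.integral_le_beta {T : Circle1 → Circle1} {μ : Measure Circle1} (hμ : InvProb T μ)
    {f : Circle1 → ℝ} (hf : Continuous f) : ∫ x, f x ∂μ ≤ beta f T := by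
  obtain ⟨B, hB⟩ := exists_forall_abs_le hf
  refine le_csSup ⟨B, ?_⟩ ⟨μ, hμ, rfl⟩
  rintro _ ⟨ν, hν, rfl⟩
  have := hν.1
  simpa using integral_mono (hν.integrable hf) (integrable_const B) fun z => (abs_le.1 (hB z)).2

lemma beta_le_beta_add {T : Circle1 → Circle1} {f g : Circle1 → ℝ} (hf : Continuous f)
    (hg : Continuous g) {ε : ℝ} (hε : 0 ≤ ε) (h : ∀ z, f z ≤ g z + ε) :
    beta f T ≤ beta g T + ε := by
  rcases {μ | InvProb T μ}.eq_empty_or_nonempty with hempty | hne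
  · simpa [beta, hempty] using hε
  refine csSup_le (hne.image _) ?_
  rintro _ ⟨μ, hμ, rfl⟩
  have := hμ.1
  calc ∫ x, f x ∂μ ≤ ∫ x, (g x + ε) ∂μ :=
        integral_mono (hμ.integrable hf) ((hμ.integrable hg).add (integrable_const ε)) h
    _ = ∫ x, g x ∂μ + ε := by
        simp [integral_add (hμ.integrable hg) (integrable_const ε)]
    _ ≤ beta g T + ε := by gcongr; exact hμ.integral_le_beta hg

lemma tendsto_beta (T : Circle1 → Circle1) {ι : Type*} {p : Filter ι} {f : ι → Circle1 → ℝ}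
    {f₀ : Circle1 → ℝ} (hfc : ∀ i, Continuous (f i)) (hf₀ : Continuous f₀)
    (hf : TendstoUniformly f f₀ p) : Tendsto (fun i => beta (f i) T) p (𝓝 (beta f₀ T)) := by
  rw [Metric.tendstoUniformly_iff] at hf
  refine Metric.tendsto_nhds.2 fun ε hε => (hf (ε / 2) (half_pos hε)).mono fun i hi => ?_
  have hclose : ∀ z, |f₀ z - f i z| ≤ ε / 2 := fun z => (hi z).le
  have h₁ := beta_le_beta_add (T := T) (hfc i) hf₀ (half_pos hε).le
    fun z => by linarith [(abs_le.1 (hclose z)).1]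
  have h₂ := beta_le_beta_add (T := T) hf₀ (hfc i) (half_pos hε).le
    fun z => by linarith [(abs_le.1 (hclose z)).2]
  rw [Real.dist_eq, abs_lt]
  constructor <;> linarith

section Subaction
variable {T : Circle1 → Circle1} {f g : Circle1 → ℝ}

lemma mapsTo_Kset : MapsTo T (Kset f T) (Kset f T) := fun x hx => by
  simp only [Kset, mem_iUnion, exists_prop] at hx ⊢
  obtain ⟨g, hg, hx⟩ := hx
  refine ⟨g, hg, mem_iInter.2 fun n => ?_⟩
  obtain ⟨w, hw, rfl⟩ := mem_iInter.1 hx n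
  exact ⟨T w, fun m => hw (m + 1), ((Function.Commute.refl T).iterate_left n).eq w⟩

lemma exists_mem_Gset_apply_zero_eq_zero {x : Circle1} (hx : x ∈ Kset f T) :
    ∃ g ∈ Gset f T, g 0 = 0 ∧ x ∈ Lambda f T g := by
  simp only [Kset, mem_iUnion, exists_prop] at hx
  obtain ⟨g, ⟨⟨K, hK⟩, ⟨hc, hsub⟩, hcal⟩, hx⟩ := hx
  have hE : Eset f T (fun z => g z - g 0) = Eset f T g := by
    ext z
    simp only [Eset, mem_ofPred_eq]
    constructor <;> intro h <;> linarith
  refine ⟨fun z => g z - g 0, ⟨⟨K, fun z w => by simpa using hK z w⟩,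
    ⟨hc.sub continuous_const, fun z => by linarith [hsub z]⟩, fun z => ?_⟩, sub_self _, ?_⟩
  · obtain ⟨y, hy, h⟩ := hcal z
    exact ⟨y, hy, by linarith⟩
  · simpa only [Lambda, LambdaStar, hE] using hx

lemma IsSubaction.add_birkhoffSum_le (h : IsSubaction f T g) (n : ℕ) (y : Circle1) :
    g y + birkhoffSum T f n y ≤ g (T^[n] y) + n * beta f T := by
  induction n with
  | zero => simp
  | succ n ih =>
    rw [birkhoffSum_succ, Function.iterate_succ_apply', Nat.cast_succ]
    linarith [h.2 (T^[n] y)]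

lemma IsCalibrated.exists_add_birkhoffSum_eq (h : IsCalibrated f T g) (n : ℕ) (x : Circle1) :
    ∃ y, T^[n] y = x ∧ g y + birkhoffSum T f n y = g x + n * beta f T := by
  induction n with
  | zero => exact ⟨x, rfl, by simp⟩
  | succ n ih =>
    obtain ⟨y, hy, hgy⟩ := ih
    obtain ⟨z, hz, hgz⟩ := h.2 y
    refine ⟨z, by rw [Function.iterate_succ_apply, hz, hy], ?_⟩
    rw [birkhoffSum_succ', hz, Nat.cast_succ]
    linarith

/-- Follow a calibrated backward orbit of `x` of length `n` by a backward orbit of `x'`, and let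
`n → ∞`. -/
lemma IsExpandingLiftWith.lipschitzWith_of_mem_Gset {F : ℝ → ℝ} {d : ℕ} {C l : ℝ}
    (hF : IsExpandingLiftWith F d C l) {K : NNReal} (hf : LipschitzWith K f)
    (hg : g ∈ Gset f (cmap F)) : LipschitzWith (K * C⁻¹ * (l - 1)⁻¹).toNNReal g := by
  obtain ⟨⟨M, hM⟩, hcal⟩ := hg
  have hC := hF.const_pos
  have hl := hF.inv_rate_pos
  refine LipschitzWith.of_le_add_mul _ fun x x' => ?_
  rw [Real.coe_toNNReal _ (by have := sub_pos.2 hF.one_lt; positivity)]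
  have hstep (n : ℕ) : g x ≤
      g x' + K * C⁻¹ * (l - 1)⁻¹ * dist x x' + M * C⁻¹ * dist x x' * l⁻¹ ^ n := by
    obtain ⟨y, rfl, hy⟩ := hcal.exists_add_birkhoffSum_eq n x
    obtain ⟨y', rfl, hd⟩ := hF.exists_preimage_dist_le n y x'
    set D := dist ((cmap F)^[n] y) ((cmap F)^[n] y')
    have hsum : dist (birkhoffSum (cmap F) f n y) (birkhoffSum (cmap F) f n y') ≤
        K * (C⁻¹ * D) * (l - 1)⁻¹ :=
      dist_birkhoffSum_le hF.one_lt hf (by positivity) fun j hj =>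
        (hd j hj).trans_eq (by ring)
    have hend : dist (g y) (g y') ≤ M * (C⁻¹ * l⁻¹ ^ n * D) :=
      (hM.dist_le_mul y y').trans (by gcongr; exact hd 0 n.zero_le)
    have hsub := hcal.1.add_birkhoffSum_le n y'
    linarith [(abs_le.1 hsum).2, (abs_le.1 hend).2]
  have hlim := (tendsto_pow_atTop_nhds_zero_of_lt_one hl.le
    (inv_lt_one_of_one_lt₀ hF.one_lt)).const_mul (M * C⁻¹ * dist x x')
  rw [mul_zero] at hlim
  simpa using ge_of_tendsto (hlim.const_add _) (Eventually.of_forall hstep)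

end Subaction

section Limit
variable {ι : Type*} {p : Ultrafilter ι} {T : Circle1 → Circle1} {f g : ι → Circle1 → ℝ}
  {f₀ g₀ : Circle1 → ℝ} {x : ι → Circle1} {x₀ : Circle1}

lemma exists_tendstoUniformly_of_lipschitzWith {X : Type*} [PseudoMetricSpace X] [CompactSpace X]
    {h : ι → X → ℝ} {K : NNReal} (hK : ∀ᶠ i in (p : Filter ι), LipschitzWith K (h i)) {a : X}
    (ha : ∀ᶠ i in (p : Filter ι), h i a = 0) :
    ∃ h₀, LipschitzWith K h₀ ∧ TendstoUniformly h h₀ p := by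
  have hpointwise (z : X) : ∃ b, Tendsto (fun i => h i z) p (𝓝 b) := by
    obtain ⟨b, -, hb⟩ := (isCompact_closedBall (0 : ℝ) (K * dist z a)).ultrafilter_le_nhds
      (p.map fun i => h i z) (by
        rw [le_principal_iff, Ultrafilter.mem_coe, Ultrafilter.mem_map]
        filter_upwards [hK, ha] with i hi hia
        simpa [hia] using hi.dist_le_mul z a)
    exact ⟨b, hb⟩
  choose h₀ hh₀ using hpointwise
  have hlip : LipschitzWith K h₀ := .of_dist_le_mul fun z w =>
    le_of_tendsto ((hh₀ z).dist (hh₀ w)) (hK.mono fun i hi => hi.dist_le_mul z w)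
  refine ⟨h₀, hlip, tendstoLocallyUniformly_iff_tendstoUniformly_of_compactSpace.1 <|
    tendstoLocallyUniformly_iff_forall_tendsto.2 fun z => ?_⟩
  rw [tendsto_uniformity_iff_dist_tendsto_zero]
  have hbound : Tendsto (fun y : ι × X => K * dist y.2 z + dist (h₀ z) (h y.1 z) + K * dist y.2 z)
      (p ×ˢ 𝓝 z) (𝓝 0) := by
    have hd : Tendsto (fun y : ι × X => K * dist y.2 z) (p ×ˢ 𝓝 z) (𝓝 0) := by
      simpa using ((tendsto_iff_dist_tendsto_zero.1 tendsto_snd).const_mul (K : ℝ))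
    have hz := (tendsto_const_nhds (x := h₀ z)).dist ((hh₀ z).comp (tendsto_fst (g := 𝓝 z)))
    simpa using (hd.add hz).add hd
  refine squeeze_zero' (Eventually.of_forall fun _ => dist_nonneg) ?_ hbound
  filter_upwards [tendsto_fst.eventually hK] with y hy
  refine (dist_triangle4 _ (h₀ z) (h y.1 z) _).trans ?_
  gcongr
  · exact hlip.dist_le_mul _ _
  · rw [dist_comm y.2]; exact hy.dist_le_mul _ _

variable (hf : TendstoUniformly f f₀ p) (hg : TendstoUniformly g g₀ p)
  (hβ : Tendsto (fun i => beta (f i) T) p (𝓝 (beta f₀ T)))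
  (hf₀ : Continuous f₀) (hg₀ : Continuous g₀)
include hf hg hβ hg₀

lemma isSubaction_of_tendstoUniformly
    (h : ∀ᶠ i in (p : Filter ι), IsSubaction (f i) T (g i)) : IsSubaction f₀ T g₀ :=
  ⟨hg₀, fun z => le_of_tendsto_of_tendsto ((hg.tendsto_at z).add (hf.tendsto_at z))
    ((hg.tendsto_at (T z)).add hβ) (h.mono fun _ hi => hi.2 z)⟩

variable (hT : Continuous T)
include hT hf₀

lemma mem_Eset_of_tendsto (h : ∀ᶠ i in (p : Filter ι), x i ∈ Eset (f i) T (g i))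
    (hx : Tendsto x p (𝓝 x₀)) : x₀ ∈ Eset f₀ T g₀ :=
  tendsto_nhds_unique_of_eventuallyEq
    ((hg.tendsto_comp hg₀.continuousAt hx).add (hf.tendsto_comp hf₀.continuousAt hx))
    ((hg.tendsto_comp hg₀.continuousAt ((hT.tendsto x₀).comp hx)).add hβ) h

lemma isCalibrated_of_tendstoUniformly
    (h : ∀ᶠ i in (p : Filter ι), IsCalibrated (f i) T (g i)) : IsCalibrated f₀ T g₀ := by
  refine ⟨isSubaction_of_tendstoUniformly hf hg hβ hg₀ (h.mono fun _ hi => hi.1), fun z => ?_⟩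
  obtain ⟨y, hy⟩ := (h.mono fun _ hi => hi.2 z).choice
  have hlim : Tendsto y p (𝓝 _) := (p.map y).le_nhds_lim
  have hyz : T (p.map y).lim = z := tendsto_nhds_unique_of_eventuallyEq
    ((hT.tendsto _).comp hlim) tendsto_const_nhds (hy.mono fun _ hi => hi.1)
  have hmem : (p.map y).lim ∈ Eset f₀ T g₀ := mem_Eset_of_tendsto hf hg hβ hf₀ hg₀ hT
    (hy.mono fun i hi => by simpa only [Eset, mem_ofPred_eq, hi.1] using hi.2) hlim
  exact ⟨_, hyz, by rw [← hyz]; exact hmem⟩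

lemma mem_LambdaStar_of_tendsto (h : ∀ᶠ i in (p : Filter ι), x i ∈ LambdaStar (f i) T (g i))
    (hx : Tendsto x p (𝓝 x₀)) : x₀ ∈ LambdaStar f₀ T g₀ := fun n =>
  mem_Eset_of_tendsto hf hg hβ hf₀ hg₀ hT (h.mono fun _ hi => hi n)
    (((hT.iterate n).tendsto x₀).comp hx)

lemma mem_Lambda_of_tendsto (h : ∀ᶠ i in (p : Filter ι), x i ∈ Lambda (f i) T (g i))
    (hx : Tendsto x p (𝓝 x₀)) : x₀ ∈ Lambda f₀ T g₀ := mem_iInter.2 fun n => by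
  obtain ⟨w, hw⟩ := (h.mono fun _ hi => mem_iInter.1 hi n).choice
  have hlim : Tendsto w p (𝓝 _) := (p.map w).le_nhds_lim
  refine ⟨_, mem_LambdaStar_of_tendsto hf hg hβ hf₀ hg₀ hT (hw.mono fun _ hi => hi.1) hlim, ?_⟩
  exact tendsto_nhds_unique_of_eventuallyEq (((hT.iterate n).tendsto _).comp hlim) hx
    (hw.mono fun _ hi => hi.2)

end Limit

lemma mem_Kset_of_tendsto {ι : Type*} {p : Ultrafilter ι} {T : Circle1 → Circle1}
    (hT : Continuous T) {f : ι → Circle1 → ℝ} {f₀ : Circle1 → ℝ} (hfc : ∀ i, Continuous (f i))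
    (hf₀ : Continuous f₀) (hf : TendstoUniformly f f₀ p) {K : NNReal}
    (hK : ∀ᶠ i in (p : Filter ι), ∀ g ∈ Gset (f i) T, LipschitzWith K g) {x : ι → Circle1}
    {x₀ : Circle1} (hx : ∀ᶠ i in (p : Filter ι), x i ∈ Kset (f i) T) (hx₀ : Tendsto x p (𝓝 x₀)) :
    x₀ ∈ Kset f₀ T := by
  obtain ⟨g, hg⟩ := (hx.mono fun _ hi => exists_mem_Gset_apply_zero_eq_zero hi).choice
  obtain ⟨g₀, hlip, hlim⟩ := exists_tendstoUniformly_of_lipschitzWith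
    ((hK.and hg).mono fun i hi => hi.1 _ hi.2.1) (hg.mono fun _ hi => hi.2.1)
  have hβ := tendsto_beta T hfc hf₀ hf
  have hcal := isCalibrated_of_tendstoUniformly hf hlim hβ hf₀ hlip.continuous hT
    (hg.mono fun _ hi => hi.1.2)
  exact mem_biUnion (x := g₀) ⟨⟨K, hlip⟩, hcal⟩ <| mem_Lambda_of_tendsto hf hlim hβ hf₀
    hlip.continuous hT (hg.mono fun _ hi => hi.2.2) hx₀

/-! ### Upper semicontinuity of `K` in the `C^r` topology -/

section CrFun
variable {r : ℕ∞} (f₀ : CrFun r)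

lemma CrFun.continuous (f : CrFun r) : Continuous f.1 := continuous_of_comp_coe f.2.continuous

lemma CrFun.contDiff_one (hr : 1 ≤ r) (f : CrFun r) : ContDiff ℝ 1 fun x : ℝ => f.1 x :=
  f.2.of_le (mod_cast hr)

lemma tendstoUniformly_iteratedDeriv {k : ℕ} (hk : (k : ℕ∞) ≤ r) :
    TendstoUniformly (fun f : CrFun r => iteratedDeriv k fun x : ℝ => f.1 x)
      (iteratedDeriv k fun x : ℝ => f₀.1 x) (𝓝 f₀) := by
  have hcont : Continuous fun f : CrFun r => crSeq r (fun x : ℝ => f.1 x) k :=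
    continuous_pi_iff.1 continuous_induced_dom k
  have hunif := UniformFun.tendsto_iff_tendstoUniformly.1 (hcont.tendsto f₀)
  simp only [crSeq, hk, if_true] at hunif
  exact hunif

lemma tendstoUniformly_coeFn : TendstoUniformly (fun f : CrFun r => f.1) f₀.1 (𝓝 f₀) := by
  simpa only [iteratedDeriv_zero, Function.comp_def, coe_rep] using
    (tendstoUniformly_iteratedDeriv f₀ (k := 0) (by simp)).comp rep

lemma tendstoUniformly_circleDeriv (hr : 1 ≤ r) :
    TendstoUniformly (fun f : CrFun r => circleDeriv fun x => f.1 x) (circleDeriv fun x => f₀.1 x)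
      (𝓝 f₀) := by
  have hunif := (tendstoUniformly_iteratedDeriv f₀ (k := 1) (by simpa using hr)).comp rep
  simp only [iteratedDeriv_one] at hunif
  exact hunif

lemma exists_eventually_abs_circleDeriv_le (hr : 1 ≤ r) :
    ∃ B, ∀ᶠ f : CrFun r in 𝓝 f₀, ∀ z, |circleDeriv (fun x => f.1 x) z| ≤ B := by
  obtain ⟨B, hB⟩ := exists_forall_abs_le (continuous_circleDeriv_comp_coe (f₀.contDiff_one hr))
  refine ⟨B + 1, ((Metric.tendstoUniformly_iff.1 (tendstoUniformly_circleDeriv f₀ hr)) 1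
    one_pos).mono fun f hf z => ?_⟩
  have hclose := hf z
  rw [Real.dist_eq, abs_sub_comm] at hclose
  linarith [hB z, abs_sub_abs_le_abs_sub (circleDeriv (fun x => f.1 x) z)
    (circleDeriv (fun x => f₀.1 x) z)]

lemma exists_eventually_lipschitzWith (hr : 1 ≤ r) :
    ∃ K, ∀ᶠ f : CrFun r in 𝓝 f₀, LipschitzWith K f.1 := by
  obtain ⟨B, hB⟩ := exists_eventually_abs_circleDeriv_le f₀ hr
  exact ⟨B.toNNReal, hB.mono fun f hf => lipschitzWith_of_abs_circleDeriv_le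
    ((f.contDiff_one hr).differentiable one_ne_zero) hf⟩

end CrFun

namespace IsExpandingLiftWith
variable {F : ℝ → ℝ} {d : ℕ} {C l : ℝ} (hF : IsExpandingLiftWith F d C l) {r : ℕ∞} (hr : 1 ≤ r)
include hF hr

lemma isClosed_setOf_mem_Kset :
    IsClosed {q : CrFun r × Circle1 | q.2 ∈ Kset q.1.1 (cmap F)} := by
  refine isClosed_iff_ultrafilter.2 fun ⟨f₀, x₀⟩ p hlim hp => ?_
  have hfst : Tendsto Prod.fst (p : Filter (CrFun r × Circle1)) (𝓝 f₀) :=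
    (continuous_fst.tendsto _).mono_left hlim
  have hsnd : Tendsto Prod.snd (p : Filter (CrFun r × Circle1)) (𝓝 x₀) :=
    (continuous_snd.tendsto _).mono_left hlim
  have hunif : TendstoUniformly (fun q : CrFun r × Circle1 => q.1.1) f₀.1 p :=
    fun u hu => hfst.eventually (tendstoUniformly_coeFn f₀ u hu)
  obtain ⟨K, hK⟩ := exists_eventually_lipschitzWith f₀ hr
  exact mem_Kset_of_tendsto hF.continuous_cmap (fun q => q.1.continuous) f₀.continuous hunif
    ((hfst.eventually hK).mono fun _ hq _ hg => hF.lipschitzWith_of_mem_Gset hq hg) hp hsnd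

lemma isClosed_Kset (f : CrFun r) : IsClosed (Kset f.1 (cmap F)) :=
  (hF.isClosed_setOf_mem_Kset hr).preimage (by fun_prop : Continuous fun z : Circle1 => (f, z))

lemma isOpen_setOf_Kset_subset {W : Set Circle1} (hW : IsOpen W) :
    IsOpen {f : CrFun r | Kset f.1 (cmap F) ⊆ W} := by
  have hclosed := isClosedMap_fst_of_compactSpace _
    ((hF.isClosed_setOf_mem_Kset hr).inter (hW.isClosed_compl.preimage continuous_snd))
  convert hclosed.isOpen_compl using 1
  ext f
  simp [subset_def]

end IsExpandingLiftWith

/-! ### Nondegeneracy of the supercriticality functional -/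

lemma exists_circleDeriv_eq {v : Circle1 → ℝ} (hv : Continuous v) (h₀ : ∫ z, v z = 0) :
    ∃ φ : CrFun 1, (circleDeriv fun x => φ.1 x) = v := by
  have hcont : Continuous fun x : ℝ => v x := hv.comp (AddCircle.continuous_mk' 1)
  let V : ℝ → ℝ := fun x => ∫ t in (0 : ℝ)..x, v t
  have hderiv (x : ℝ) : HasDerivAt V (v x) x := (hcont.integral_hasStrictDerivAt 0 x).hasDerivAt
  have hper : Function.Periodic V 1 := fun x => by
    have hint := fun a b => hcont.intervalIntegrable (μ := volume) a b
    simp only [V]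
    rw [← intervalIntegral.integral_add_adjacent_intervals (hint 0 x) (hint x (x + 1)),
      AddCircle.intervalIntegral_preimage, h₀, add_zero]
  have hcoe : ∀ x : ℝ, V (rep (x : Circle1)) = V x := map_rep_coe_of_periodic hper
  have hV : ContDiff ℝ 1 V := contDiff_one_iff_deriv.2
    ⟨fun x => (hderiv x).differentiableAt, by rwa [funext fun x => (hderiv x).deriv]⟩
  refine ⟨⟨fun z => V (rep z), by simp only [hcoe]; exact hV⟩, funext fun z => ?_⟩
  simp only [hcoe, circleDeriv]
  exact (hderiv _).deriv.trans (by rw [coe_rep])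

section Peak
variable {X : Type*} [MetricSpace X]

lemma inv_one_add_dist_pow_nonneg (a z : X) (N : ℕ) : 0 ≤ ((1 + dist z a)⁻¹) ^ N := by
  positivity

lemma inv_one_add_dist_pow_le_one (a z : X) (N : ℕ) : ((1 + dist z a)⁻¹) ^ N ≤ 1 :=
  pow_le_one₀ (by positivity) (inv_le_one_of_one_le₀ (by simp))

lemma continuous_inv_one_add_dist_pow (a : X) (N : ℕ) :
    Continuous fun z => ((1 + dist z a)⁻¹) ^ N :=
  ((continuous_const.add (continuous_id.dist continuous_const)).inv₀ fun z => by
    have := dist_nonneg (x := z) (y := a)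
    dsimp; positivity).pow N

lemma tendsto_inv_one_add_dist_pow (a z : X) :
    Tendsto (fun N : ℕ => ((1 + dist z a)⁻¹) ^ N) atTop (𝓝 (indicator {a} 1 z)) := by
  rcases eq_or_ne z a with rfl | hz
  · simp
  · rw [indicator_of_notMem (by simpa using hz)]
    exact tendsto_pow_atTop_nhds_zero_of_lt_one (by positivity)
      (inv_lt_one_of_one_lt₀ (by simpa using hz))

variable [MeasurableSpace X] [BorelSpace X] [SecondCountableTopology X] (μ : Measure X)

lemma tendsto_integral_inv_one_add_dist_pow [IsFiniteMeasure μ] {a : X} (ha : μ {a} = 0) :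
    Tendsto (fun N : ℕ => ∫ z, ((1 + dist z a)⁻¹) ^ N ∂μ) atTop (𝓝 0) := by
  have hzero : ∫ z, indicator {a} (1 : X → ℝ) z ∂μ = 0 := by
    rw [integral_indicator_one (measurableSet_singleton a), measureReal_def, ha,
      ENNReal.toReal_zero]
  rw [← hzero]
  refine tendsto_integral_of_dominated_convergence (fun _ => 1)
    (fun N => (continuous_inv_one_add_dist_pow a N).aestronglyMeasurable) (integrable_const 1)
    (fun N => .of_forall fun z => ?_) (.of_forall (tendsto_inv_one_add_dist_pow a))
  rw [Real.norm_of_nonneg (inv_one_add_dist_pow_nonneg a z N)]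
  exact inv_one_add_dist_pow_le_one a z N

end Peak

/-- Subtracting the mean of a continuous function that peaks at `a` makes it a derivative. -/
lemma exists_tendsto_circleDeriv_indicator (a : Circle1) :
    ∃ φ : ℕ → CrFun 1, (∀ N z, |circleDeriv (fun x => (φ N).1 x) z| ≤ 1) ∧
      ∀ z, Tendsto (fun N => circleDeriv (fun x => (φ N).1 x) z) atTop (𝓝 (indicator {a} 1 z)) := by
  let w : ℕ → Circle1 → ℝ := fun N z => ((1 + dist z a)⁻¹) ^ N
  have hw (N) : Continuous (w N) := continuous_inv_one_add_dist_pow a N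
  have hint (N) : Integrable (w N) :=
    (hw N).integrable_of_hasCompactSupport (.of_compactSpace _)
  have hw₀ (N z) : 0 ≤ w N z := inv_one_add_dist_pow_nonneg a z N
  have hw₁ (N z) : w N z ≤ 1 := inv_one_add_dist_pow_le_one a z N
  have hvol : volume.real (univ : Set Circle1) = 1 := by simp [measureReal_def]
  have hmean₀ (N) : 0 ≤ ∫ z, w N z := integral_nonneg (hw₀ N)
  have hmean₁ (N) : ∫ z, w N z ≤ 1 :=
    (integral_mono (hint N) (integrable_const 1) (hw₁ N)).trans_eq (by simp [hvol])
  have hmean : Tendsto (fun N => ∫ z, w N z) atTop (𝓝 0) :=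
    tendsto_integral_inv_one_add_dist_pow volume
      (by simpa using AddCircle.volume_closedBall 1 (x := a) 0)
  choose φ hφ using fun N => exists_circleDeriv_eq (v := fun z => w N z - ∫ z, w N z)
    ((hw N).sub continuous_const) (by rw [integral_sub (hint N) (integrable_const _)]; simp [hvol])
  refine ⟨φ, fun N z => ?_, fun z => ?_⟩
  · rw [hφ, abs_le]
    constructor <;> linarith [hw₀ N z, hw₁ N z, hmean₀ N, hmean₁ N]
  · simp only [hφ]
    simpa only [sub_zero] using (tendsto_inv_one_add_dist_pow a z).sub hmean

lemma backwardSum_indicator_of_forall_ne {F : ℝ → ℝ} {y : ℕ → Circle1} {a : Circle1}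
    (h : ∀ k, a ≠ y (k + 1)) : backwardSum F (indicator {a} 1) y = 0 := by
  simp [backwardSum, fun k => (h k).symm]

lemma backwardSum_indicator_apply_one {F : ℝ → ℝ} {y : ℕ → Circle1} (h : ∀ k, y 1 ≠ y (k + 2)) :
    backwardSum F (indicator {y 1} 1) y = (circleDeriv F (y 1))⁻¹ := by
  rw [backwardSum, tsum_eq_single 0 fun k hk => ?_]
  · simp
  · obtain ⟨k, rfl⟩ := Nat.exists_eq_succ_of_ne_zero hk
    simp [(h k).symm]

namespace IsExpandingLiftWith
variable {F : ℝ → ℝ} {d : ℕ} {C l : ℝ} (hF : IsExpandingLiftWith F d C l)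
include hF

lemma continuous_backwardSum_circleDeriv {r : ℕ∞} (hr : 1 ≤ r) (y : ℕ → Circle1) :
    Continuous fun φ : CrFun r => backwardSum F (circleDeriv fun x => φ.1 x) y :=
  continuous_iff_continuousAt.2 fun φ₀ => by
    obtain ⟨B, hB⟩ := exists_eventually_abs_circleDeriv_le φ₀ hr
    exact hF.tendsto_backwardSum hB (tendstoUniformly_circleDeriv φ₀ hr).tendsto_at y

lemma exists_backwardSum_circleDeriv_ne {D : Set (CrFun 1)} (hD : Dense D) {y z : ℕ → Circle1}
    (hy : IsBackwardOrbit (cmap F) y) (hz : IsBackwardOrbit (cmap F) z) (h₀ : y 0 = z 0)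
    (h₁ : y 1 ≠ z 1) (hyper : ∀ k, y k ∉ Function.periodicPts (cmap F))
    (hzper : ∀ k, z k ∉ Function.periodicPts (cmap F)) :
    ∃ φ ∈ D, backwardSum F (circleDeriv fun x => φ.1 x) y ≠
      backwardSum F (circleDeriv fun x => φ.1 x) z := by
  obtain ⟨φ, hbound, hlim⟩ := exists_tendsto_circleDeriv_indicator (y 1)
  have hlimit := hF.tendsto_backwardSum (.of_forall hbound) hlim
  have hne : backwardSum F (indicator {y 1} 1) y ≠ backwardSum F (indicator {y 1} 1) z := by
    rw [backwardSum_indicator_apply_one fun k => hy.ne_of_lt (by omega) (hyper (k + 2)),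
      backwardSum_indicator_of_forall_ne (hy.one_ne_of_zero_eq hz h₀ h₁ hzper)]
    exact (inv_pos.2 (hF.circleDeriv_pos (y 1))).ne'
  obtain ⟨N, hN⟩ := (((hlimit y).sub (hlimit z)).eventually_ne (sub_ne_zero.2 hne)).exists
  exact (hD.inter_open_nonempty _ (isOpen_ne_fun (hF.continuous_backwardSum_circleDeriv le_rfl y)
    (hF.continuous_backwardSum_circleDeriv le_rfl z)) ⟨φ N, sub_ne_zero.1 hN⟩).imp
      fun _ h => ⟨h.2, h.1⟩

end IsExpandingLiftWith

lemma exists_finset_eventually_lt_abs {X ι : Type*} [TopologicalSpace X] {S : Set X}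
    (hS : IsCompact S) {b : ι → X → ℝ} (hb : ∀ i, Continuous (b i))
    (hne : ∀ x ∈ S, ∃ i, b i x ≠ 0) :
    ∃ t : Finset ι, ∃ c > 0, ∀ᶠ x in 𝓝ˢ S, ∃ i ∈ t, c < |b i x| := by
  classical
  refine hS.induction_on (p := fun S => ∃ t : Finset ι, ∃ c > 0, ∀ᶠ x in 𝓝ˢ S, ∃ i ∈ t, c < |b i x|)
    ⟨∅, 1, one_pos, by simp⟩ ?_ ?_ fun x hx => ?_
  · rintro S S' hsub ⟨t, c, hc, ht⟩
    exact ⟨t, c, hc, ht.filter_mono (nhdsSet_mono hsub)⟩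
  · rintro S S' ⟨t, c, hc, ht⟩ ⟨t', c', hc', ht'⟩
    refine ⟨t ∪ t', min c c', lt_min hc hc', ?_⟩
    rw [nhdsSet_union, eventually_sup]
    exact ⟨ht.mono fun x ⟨i, hi, h⟩ =>
        ⟨i, Finset.mem_union_left _ hi, (min_le_left _ _).trans_lt h⟩,
      ht'.mono fun x ⟨i, hi, h⟩ =>
        ⟨i, Finset.mem_union_right _ hi, (min_le_right _ _).trans_lt h⟩⟩
  · obtain ⟨i, hi⟩ := hne x hx
    have hopen : IsOpen {x' | |b i x| / 2 < |b i x'|} := isOpen_lt continuous_const (hb i).abs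
    exact ⟨_, mem_nhdsWithin_of_mem_nhds (hopen.mem_nhds (half_lt_self (abs_pos.2 hi))), {i},
      |b i x| / 2, half_pos (abs_pos.2 hi),
      Filter.Eventually.mono hopen.mem_nhdsSet_self fun _ h => ⟨i, Finset.mem_singleton_self i, h⟩⟩

section SeparatedPairs
variable {X : Type*} [MetricSpace X] {T : X → X} (hT : Continuous T) (ρ : ℝ) {N : Set X}
include hT

lemma isClosed_setOf_isBackwardOrbit : IsClosed {y | IsBackwardOrbit T y} := by
  simp only [IsBackwardOrbit, ofPred_forall]
  exact isClosed_iInter fun k =>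
    isClosed_eq (hT.comp (continuous_apply (k + 1))) (continuous_apply k)

lemma isClosed_separatedPairs (hN : IsClosed N) : IsClosed (separatedPairs T ρ N) := by
  have hback := isClosed_setOf_isBackwardOrbit hT
  have hmem : IsClosed {y : ℕ → X | ∀ k, y k ∈ N} := by
    simp only [ofPred_forall]
    exact isClosed_iInter fun k => hN.preimage (continuous_apply k)
  have hbase : IsClosed {p : (ℕ → X) × (ℕ → X) | p.1 0 = p.2 0} :=
    isClosed_eq (by fun_prop) (by fun_prop)
  have hsep : IsClosed {p : (ℕ → X) × (ℕ → X) | ρ ≤ dist (p.1 1) (p.2 1)} :=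
    isClosed_le continuous_const (by fun_prop)
  exact (hback.preimage continuous_fst).inter <| (hback.preimage continuous_snd).inter <|
    (hmem.preimage continuous_fst).inter <| (hmem.preimage continuous_snd).inter <|
    hbase.inter hsep

lemma exists_separatedPairs_cthickening_subset [CompactSpace X] (hN : IsClosed N)
    {W : Set ((ℕ → X) × (ℕ → X))} (hW : W ∈ 𝓝ˢ (separatedPairs T ρ N)) :
    ∃ δ > 0, separatedPairs T ρ (Metric.cthickening δ N) ⊆ W := by
  have hcap : ∀ p ∈ ⋂ δ : Ioi (0 : ℝ), separatedPairs T ρ (Metric.cthickening δ N),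
      p ∈ separatedPairs T ρ N := fun p hp => by
    have hp (δ : Ioi (0 : ℝ)) := mem_iInter.1 hp δ
    have hmem {x : X} (hx : ∀ δ : Ioi (0 : ℝ), x ∈ Metric.cthickening δ N) : x ∈ N := by
      rw [← hN.closure_eq, Metric.closure_eq_iInter_cthickening]
      exact mem_iInter₂.2 fun δ hδ => hx ⟨δ, hδ⟩
    obtain ⟨hy, hz, -, -, h⟩ := hp ⟨1, mem_Ioi.2 one_pos⟩
    exact ⟨hy, hz, fun k => hmem fun δ => (hp δ).2.2.1 k, fun k => hmem fun δ => (hp δ).2.2.2.1 k,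
      h⟩
  obtain ⟨δ, hsub⟩ := exists_subset_nhds_of_isCompact
    (V := fun δ : Ioi (0 : ℝ) => separatedPairs T ρ (Metric.cthickening δ N))
    (directed_of_isDirected_ge fun _ _ h => separatedPairs_mono (Metric.cthickening_mono h N))
    (fun δ => (isClosed_separatedPairs hT ρ Metric.isClosed_cthickening).isCompact)
    fun p hp => mem_nhdsSet_iff_forall.1 hW p (hcap p hp)
  exact ⟨δ, δ.2, hsub⟩

end SeparatedPairs

/-- The functional on pairs of backward orbits whose zeros, for `u = f'`, detect supercritical
values of `f`. -/
noncomputable def backwardGap (F : ℝ → ℝ) (u : Circle1 → ℝ)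
    (p : (ℕ → Circle1) × (ℕ → Circle1)) : ℝ :=
  backwardSum F u p.1 - backwardSum F u p.2

namespace IsExpandingLiftWith
variable {F : ℝ → ℝ} {d : ℕ} {C l : ℝ} (hF : IsExpandingLiftWith F d C l)
include hF

lemma continuous_backwardGap {u : Circle1 → ℝ} (hu : Continuous u) :
    Continuous (backwardGap F u) :=
  ((hF.continuous_backwardSum hu).comp continuous_fst).sub
    ((hF.continuous_backwardSum hu).comp continuous_snd)

lemma exists_le_abs_backwardGap {D : Set (CrFun 1)} (hD : Dense D) {K : Set Circle1}
    (hK : IsClosed K) (hper : ∀ x ∈ K, x ∉ Function.periodicPts (cmap F)) {ρ : ℝ} (hρ : 0 < ρ) :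
    ∃ δ > 0, ∃ c > 0, ∃ J : ℕ, ∃ φ : Fin J → CrFun 1, (∀ j, φ j ∈ D) ∧
      ∀ p ∈ separatedPairs (cmap F) ρ (Metric.cthickening δ K),
        ∃ j, c ≤ |backwardGap F (circleDeriv fun x => (φ j).1 x) p| := by
  obtain ⟨t, c, hc, ht⟩ := exists_finset_eventually_lt_abs
    (isClosed_separatedPairs hF.continuous_cmap ρ hK).isCompact
    (b := fun φ : D => backwardGap F (circleDeriv fun x => φ.1.1 x))
    (fun φ => hF.continuous_backwardGap (continuous_circleDeriv_comp_coe φ.1.2))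
    fun p ⟨hy, hz, hyK, hzK, h₀, h₁⟩ => by
      obtain ⟨φ, hφ, hne⟩ := hF.exists_backwardSum_circleDeriv_ne hD hy hz h₀
        (dist_pos.1 (hρ.trans_le h₁)) (fun k => hper _ (hyK k)) fun k => hper _ (hzK k)
      exact ⟨⟨φ, hφ⟩, sub_ne_zero.2 hne⟩
  obtain ⟨δ, hδ, hsub⟩ := exists_separatedPairs_cthickening_subset hF.continuous_cmap ρ hK ht
  refine ⟨δ, hδ, c, hc, t.card, fun j => (t.equivFin.symm j).1.1, fun j => (t.equivFin.symm j).1.2,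
    fun p hp => ?_⟩
  obtain ⟨φ, hφ, hlt⟩ := hsub hp
  exact ⟨t.equivFin ⟨φ, hφ⟩, by simpa using hlt.le⟩

end IsExpandingLiftWith

/-! ### Covers of orbit segments near a set of small entropy -/

lemma exists_isDynCoverOf_card_lt_exp {X : Type*} [UniformSpace X] {T : X → X} {K : Set X} {a : ℝ}
    (ha : Dynamics.coverEntropy T K < (a : EReal)) {U : SetRel X X} (hU : U ∈ uniformity X) :
    ∃ n ≥ 1, ∃ s : Finset X, Dynamics.IsDynCoverOf T K U n s ∧ (s.card : ℝ) < Real.exp (a * n) := by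
  obtain ⟨a', ha', haa'⟩ := EReal.lt_iff_exists_real_btwn.1
    ((Dynamics.coverEntropyEntourage_le_coverEntropy T K hU).trans_lt ha)
  obtain ⟨n, hle, hn⟩ := ((ExpGrowth.eventually_le_exp ha').and (eventually_ge_atTop 1)).exists
  rw [← EReal.coe_natCast, ← EReal.coe_mul, EReal.exp_coe] at hle
  obtain ⟨s, hs, hcard⟩ := (Dynamics.coverMincard_finite_iff T K U n).1 <|
    ENat.toENNReal_lt_top.1 (hle.trans_lt ENNReal.ofReal_lt_top)
  refine ⟨n, hn, s, hs, lt_of_le_of_lt (b := Real.exp (a' * n)) ?_ ?_⟩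
  · rw [← hcard, ENat.toENNReal_coe, ← ENNReal.ofReal_natCast] at hle
    exact (ENNReal.ofReal_le_ofReal_iff (Real.exp_pos _).le).1 hle
  · gcongr
    exact_mod_cast haa'

section BowenCover
variable {X : Type*} [PseudoMetricSpace X] {T : X → X}

lemma isSymm_setOf_dist_lt (ε : ℝ) : SetRel.IsSymm {p : X × X | dist p.1 p.2 < ε} :=
  ⟨fun x y (h : dist x y < ε) => show dist y x < ε by rwa [dist_comm]⟩

lemma isOpen_setOf_bowenClose (hT : Continuous T) (ε : ℝ) (n : ℕ) (e : X) :
    IsOpen {x | BowenClose T ε n x e} := by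
  have : {x | BowenClose T ε n x e} = ⋂ k ∈ Finset.range n, {x | dist (T^[k] x) (T^[k] e) < ε} := by
    ext x
    simp [BowenClose]
  rw [this]
  exact isOpen_biInter_finset fun k _ =>
    isOpen_lt ((hT.iterate k).dist continuous_const) continuous_const

lemma mem_dynEntourage_setOf_dist_lt {ε : ℝ} {n : ℕ} {x y : X} :
    (x, y) ∈ Dynamics.dynEntourage T {p : X × X | dist p.1 p.2 < ε} n ↔ BowenClose T ε n x y :=
  Dynamics.mem_dynEntourage

lemma exists_finset_bowenClose_near {K : Set X} (hT : Continuous T) (hK : IsCompact K) {ε : ℝ}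
    {n : ℕ} {s : Finset X}
    (hs : Dynamics.IsDynCoverOf T K {p : X × X | dist p.1 p.2 < ε / 2} n s) :
    ∃ δ > 0, ∀ m : ℕ, ∃ t : Finset X, t.card ≤ s.card ^ m ∧
      ∀ x, (∀ k, T^[k] x ∈ Metric.cthickening δ K) → ∃ e ∈ t, BowenClose T ε (n * m) x e := by
  obtain ⟨δ, hδ, hsub⟩ := hK.exists_cthickening_subset_open
    (isOpen_biUnion fun e (_ : e ∈ s) => isOpen_setOf_bowenClose hT (ε / 2) n e) fun x hx => by
      obtain ⟨e, he, hxe⟩ := hs hx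
      exact mem_biUnion (x := e) he (mem_dynEntourage_setOf_dist_lt.1 hxe)
  let Q : Set X := {x | ∀ k, T^[k] x ∈ Metric.cthickening δ K}
  have hQ : MapsTo T Q Q := fun x hx k => hx (k + 1)
  have hcov : Dynamics.IsDynCoverOf T Q {p : X × X | dist p.1 p.2 < ε / 2} n s := fun x hx => by
    obtain ⟨e, he, hxe⟩ := mem_iUnion₂.1 (hsub (hx 0))
    exact ⟨e, he, mem_dynEntourage_setOf_dist_lt.2 hxe⟩
  have := isSymm_setOf_dist_lt (X := X) (ε / 2)
  refine ⟨δ, hδ, fun m => ?_⟩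
  obtain ⟨t, ht, hcard⟩ := hcov.iterate_le_pow hQ m
  refine ⟨t, hcard, fun x hx => ?_⟩
  obtain ⟨e, he, hxe⟩ := ht (show x ∈ Q from hx)
  refine ⟨e, he, fun k hk => ?_⟩
  obtain ⟨w, hxw, hwe⟩ := Dynamics.mem_dynEntourage.1 hxe k hk
  have hxw : dist (T^[k] x) w < ε / 2 := hxw
  have hwe : dist w (T^[k] e) < ε / 2 := hwe
  linarith [dist_triangle (T^[k] x) w (T^[k] e)]

end BowenCover

lemma exists_finset_card_le_mul_exp_bowenClose_near {X : Type*} [PseudoMetricSpace X] {T : X → X}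
    {K : Set X} (hT : Continuous T) (hK : IsCompact K) {a : ℝ}
    (ha : Dynamics.coverEntropy T K < (a : EReal)) {ε : ℝ} (hε : 0 < ε) :
    ∃ δ > 0, ∀ θ > 0, ∃ n : ℕ, 1 ≤ n ∧ ∃ t : Finset X, (t.card : ℝ) ≤ θ * Real.exp (a * n) ∧
      ∀ x, (∀ k, T^[k] x ∈ Metric.cthickening δ K) → ∃ e ∈ t, BowenClose T ε n x e := by
  obtain ⟨n, hn, s, hs, hcard⟩ :=
    exists_isDynCoverOf_card_lt_exp ha (Metric.dist_mem_uniformity (half_pos hε))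
  obtain ⟨δ, hδ, hcov⟩ := exists_finset_bowenClose_near hT hK hs
  have hratio : s.card / Real.exp (a * n) < 1 := (div_lt_one (Real.exp_pos _)).2 hcard
  refine ⟨δ, hδ, fun θ hθ => ?_⟩
  obtain ⟨m, hm, hm₁⟩ :=
    (((tendsto_pow_atTop_nhds_zero_of_lt_one (by positivity) hratio).eventually_le_const hθ).and
      (eventually_ge_atTop 1)).exists
  obtain ⟨t, ht, hclose⟩ := hcov m
  refine ⟨n * m, Nat.mul_pos hn hm₁, t, ?_, hclose⟩
  rw [div_pow, div_le_iff₀ (by positivity)] at hm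
  calc (t.card : ℝ) ≤ (s.card : ℝ) ^ m := mod_cast ht
    _ ≤ θ * Real.exp (a * n) ^ m := hm
    _ = θ * Real.exp (a * (n * m : ℕ)) := by
        rw [← Real.exp_nat_mul]; push_cast; ring_nf

lemma exists_finset_card_pow_three_le_bowenClose_near {X : Type*} [PseudoMetricSpace X] {T : X → X}
    {K : Set X} (hT : Continuous T) (hK : IsCompact K) {l : ℝ} (hl : 0 < l)
    (hent : Dynamics.coverEntropy T K < ((1 / 3 * Real.log l : ℝ) : EReal)) {ε : ℝ} (hε : 0 < ε) :
    ∃ δ > 0, ∀ θ > 0, ∃ n : ℕ, 1 ≤ n ∧ ∃ t : Finset X, (t.card : ℝ) ^ 3 ≤ θ * l ^ n ∧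
      ∀ x, (∀ k, T^[k] x ∈ Metric.cthickening δ K) → ∃ e ∈ t, BowenClose T ε n x e := by
  obtain ⟨δ, hδ, hcov⟩ := exists_finset_card_le_mul_exp_bowenClose_near hT hK hent hε
  refine ⟨δ, hδ, fun θ hθ => ?_⟩
  obtain ⟨n, hn, t, hcard, ht⟩ := hcov (min 1 θ) (lt_min one_pos hθ)
  refine ⟨n, hn, t, ?_, ht⟩
  have hexp : Real.exp (1 / 3 * Real.log l * n) ^ 3 = l ^ n := by
    rw [← Real.exp_nat_mul, ← Real.exp_log (pow_pos hl n), Real.log_pow]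
    push_cast
    ring_nf
  have hθ₃ : min 1 θ ^ 3 ≤ θ :=
    (pow_le_of_le_one (by positivity) (min_le_left _ _) three_ne_zero).trans (min_le_right _ _)
  calc (t.card : ℝ) ^ 3 ≤ (min 1 θ * Real.exp (1 / 3 * Real.log l * n)) ^ 3 := by gcongr
    _ = min 1 θ ^ 3 * l ^ n := by rw [mul_pow, hexp]
    _ ≤ θ * l ^ n := by gcongr

/-! ### Measure of slabs in the cube of parameters -/

lemma volume_setOf_abs_add_mul_le (a : ℝ) {b c η : ℝ} (hc : 0 < c) (hb : c ≤ |b|) :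
    volume {x : ℝ | |a + x * b| ≤ η} ≤ ENNReal.ofReal (2 * η / c) := by
  have hb₀ : b ≠ 0 := abs_pos.1 (hc.trans_le hb)
  have hsub : {x : ℝ | |a + x * b| ≤ η} ⊆ Metric.closedBall (-a / b) (η / c) := by
    intro x (hx : |a + x * b| ≤ η)
    rw [Metric.mem_closedBall, Real.dist_eq, le_div_iff₀ hc]
    refine (mul_le_mul_of_nonneg_left hb (abs_nonneg _)).trans ?_
    rwa [← abs_mul, sub_mul, div_mul_cancel₀ _ hb₀, sub_neg_eq_add, add_comm]
  refine (measure_mono hsub).trans_eq ?_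
  rw [Real.volume_closedBall, mul_div_assoc]

lemma volume_cube_inter_slab_le {J : ℕ} (a : ℝ) {b : Fin J → ℝ} {j : Fin J} {c η : ℝ} (hc : 0 < c)
    (hb : c ≤ |b j|) :
    volume {t : Fin J → ℝ | (∀ i, t i ∈ Icc (0 : ℝ) 1) ∧ |a + ∑ i, t i * b i| ≤ η} ≤
      ENNReal.ofReal (2 * η / c) := by
  obtain _ | J := J
  · exact j.elim0
  let cube : Set (Fin J → ℝ) := Set.pi univ fun _ => Icc (0 : ℝ) 1
  let E : Set (ℝ × (Fin J → ℝ)) :=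
    {q | q.2 ∈ cube ∧ |a + (q.1 * b j + ∑ i, q.2 i * b (j.succAbove i))| ≤ η}
  have hcube : MeasurableSet cube := .univ_pi fun _ => measurableSet_Icc
  have hcont : Continuous fun q : ℝ × (Fin J → ℝ) =>
      |a + (q.1 * b j + ∑ i, q.2 i * b (j.succAbove i))| := by fun_prop
  have hE : MeasurableSet E := (hcube.preimage measurable_snd).inter
    (isClosed_le hcont continuous_const).measurableSet
  have hslice (y : Fin J → ℝ) : volume ((fun x => (x, y)) ⁻¹' E) ≤
      cube.indicator (fun _ => ENNReal.ofReal (2 * η / c)) y := by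
    by_cases hy : y ∈ cube
    · rw [indicator_of_mem hy]
      refine (measure_mono fun x hx => ?_).trans
        (volume_setOf_abs_add_mul_le (a + ∑ i, y i * b (j.succAbove i)) hc hb)
      exact (congrArg abs (by ring)).trans_le hx.2
    · rw [indicator_of_notMem hy, nonpos_iff_eq_zero]
      exact measure_mono_null (fun x hx => hy hx.1) measure_empty
  have hsub : {t : Fin (J + 1) → ℝ | (∀ i, t i ∈ Icc (0 : ℝ) 1) ∧ |a + ∑ i, t i * b i| ≤ η} ⊆
      MeasurableEquiv.piFinSuccAbove (fun _ => ℝ) j ⁻¹' E := fun t ⟨ht, hslab⟩ =>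
    ⟨fun i _ => ht (j.succAbove i), by rwa [Fin.sum_univ_succAbove _ j] at hslab⟩
  refine (measure_mono hsub).trans ?_
  rw [(volume_preserving_piFinSuccAbove (fun _ => ℝ) j).measure_preimage hE.nullMeasurableSet,
    Measure.volume_eq_prod, Measure.prod_apply_symm hE]
  refine (lintegral_mono hslice).trans_eq ?_
  rw [lintegral_indicator_const hcube, volume_pi_pi]
  simp

section AffineFamily
variable {α : Type*} {J : ℕ} {S : Set α} {a : α → ℝ} {b : Fin J → α → ℝ} {c : ℝ}

lemma volume_setOf_exists_add_sum_eq_zero_le {η : ℝ} (hc : 0 < c)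
    (hlow : ∀ p ∈ S, ∃ j, c ≤ |b j p|) (ha : ∀ p ∈ S, ∀ q ∈ S, |a p - a q| ≤ η)
    (hb : ∀ j, ∀ p ∈ S, ∀ q ∈ S, |b j p - b j q| ≤ η) :
    volume {t : Fin J → ℝ | (∀ i, t i ∈ Icc (0 : ℝ) 1) ∧ ∃ p ∈ S, a p + ∑ j, t j * b j p = 0} ≤
      ENNReal.ofReal (2 * ((J + 1) * η) / c) := by
  obtain rfl | ⟨q, hq⟩ := S.eq_empty_or_nonempty
  · simp
  obtain ⟨j, hj⟩ := hlow q hq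
  refine (measure_mono ?_).trans (volume_cube_inter_slab_le (a q) (b := fun j => b j q) hc hj)
  rintro t ⟨ht, p, hp, hzero⟩
  refine ⟨ht, ?_⟩
  calc |a q + ∑ j, t j * b j q| = |(a q - a p) + ∑ j, t j * (b j q - b j p)| := by
        simp only [mul_sub, Finset.sum_sub_distrib]
        congr 1
        linarith
    _ ≤ |a q - a p| + ∑ j, |t j * (b j q - b j p)| :=
        (abs_add_le _ _).trans (by gcongr; exact Finset.abs_sum_le_sum_abs _ _)
    _ ≤ η + ∑ _j : Fin J, η := by
        gcongr with j
        · exact ha q hq p hp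
        · rw [abs_mul, abs_of_nonneg (ht j).1]
          exact (mul_le_of_le_one_left (abs_nonneg _) (ht j).2).trans (hb j q hq p hp)
    _ = (J + 1) * η := by
        rw [Finset.sum_const, Finset.card_univ, Fintype.card_fin, nsmul_eq_mul]
        ring

lemma volume_setOf_exists_add_sum_eq_zero {ι : Type*} (hc : 0 < c)
    (hlow : ∀ p ∈ S, ∃ j, c ≤ |b j p|)
    (hcells : ∀ ε > 0, ∃ (s : Finset ι) (cell : ι → Set α) (η : ℝ), S ⊆ ⋃ i ∈ s, cell i ∧
      (∀ i, ∀ p ∈ cell i, ∀ q ∈ cell i, |a p - a q| ≤ η ∧ ∀ j, |b j p - b j q| ≤ η) ∧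
      s.card * η ≤ ε) :
    volume {t : Fin J → ℝ | (∀ i, t i ∈ Icc (0 : ℝ) 1) ∧ ∃ p ∈ S, a p + ∑ j, t j * b j p = 0} =
      0 := by
  have hle : ∀ ε > 0, volume {t : Fin J → ℝ | (∀ i, t i ∈ Icc (0 : ℝ) 1) ∧
      ∃ p ∈ S, a p + ∑ j, t j * b j p = 0} ≤ ENNReal.ofReal (ε * (2 * (J + 1) / c)) := by
    intro ε hε
    obtain ⟨s, cell, η, hcover, hosc, hcard⟩ := hcells ε hε
    let piece (i : ι) : Set (Fin J → ℝ) :=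
      {t | (∀ i, t i ∈ Icc (0 : ℝ) 1) ∧ ∃ p ∈ S ∩ cell i, a p + ∑ j, t j * b j p = 0}
    have hpieces : {t : Fin J → ℝ | (∀ i, t i ∈ Icc (0 : ℝ) 1) ∧
        ∃ p ∈ S, a p + ∑ j, t j * b j p = 0} ⊆ ⋃ i ∈ s, piece i := by
      rintro t ⟨ht, p, hp, hzero⟩
      obtain ⟨i, hi, hpi⟩ := mem_iUnion₂.1 (hcover hp)
      exact mem_iUnion₂.2 ⟨i, hi, ht, p, ⟨hp, hpi⟩, hzero⟩
    calc _ ≤ ∑ i ∈ s, volume (piece i) :=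
          (measure_mono hpieces).trans (measure_biUnion_finset_le _ _)
      _ ≤ ∑ _i ∈ s, ENNReal.ofReal (2 * ((J + 1) * η) / c) := Finset.sum_le_sum fun i _ =>
          volume_setOf_exists_add_sum_eq_zero_le hc (fun p hp => hlow p hp.1)
            (fun p hp q hq => (hosc i p hp.2 q hq.2).1)
            fun j p hp q hq => (hosc i p hp.2 q hq.2).2 j
      _ = ENNReal.ofReal (s.card * η * (2 * (J + 1) / c)) := by
          rw [Finset.sum_const, nsmul_eq_mul, ← ENNReal.ofReal_natCast,
            ← ENNReal.ofReal_mul s.card.cast_nonneg]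
          congr 1
          ring
      _ ≤ _ := by gcongr
  have hlim : Tendsto (fun ε : ℝ => ENNReal.ofReal (ε * (2 * (J + 1) / c))) (𝓝[>] 0) (𝓝 0) :=
    ((ENNReal.continuous_ofReal.comp (continuous_mul_const _)).tendsto' 0 0 (by simp)).mono_left
      nhdsWithin_le_nhds
  exact nonpos_iff_eq_zero.1 (ge_of_tendsto hlim (eventually_mem_nhdsWithin.mono hle))

end AffineFamily

/-! ### Parameters with a vanishing gap -/

/-- The pairs of sequences whose common starting point and whose `n`-th terms lie in the Bowen
balls of order `n` and radius `ρ` centred at `e.1`, `e.2.1` and `e.2.2`. -/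
def bowenCell {X : Type*} [PseudoMetricSpace X] (T : X → X) (ρ : ℝ) (n : ℕ) (e : X × X × X) :
    Set ((ℕ → X) × (ℕ → X)) :=
  {p | BowenClose T ρ n (p.1 0) e.1 ∧ BowenClose T ρ n (p.1 n) e.2.1 ∧
    BowenClose T ρ n (p.2 n) e.2.2}

lemma separatedPairs_subset_biUnion_bowenCell {X : Type*} [PseudoMetricSpace X] {T : X → X}
    {ρ ε : ℝ} {n : ℕ} {N : Set X} {t : Finset X} (ht : ∀ x ∈ N, ∃ e ∈ t, BowenClose T ε n x e) :
    separatedPairs T ρ N ⊆ ⋃ e ∈ t ×ˢ t ×ˢ t, separatedPairs T ρ N ∩ bowenCell T ε n e := by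
  rintro p ⟨hy, hz, hyN, hzN, h⟩
  obtain ⟨e₀, he₀, h₀⟩ := ht _ (hyN 0)
  obtain ⟨e₁, he₁, h₁⟩ := ht _ (hyN n)
  obtain ⟨e₂, he₂, h₂⟩ := ht _ (hzN n)
  exact mem_iUnion₂.2 ⟨(e₀, e₁, e₂),
    Finset.mk_mem_product he₀ (Finset.mk_mem_product he₁ he₂), ⟨hy, hz, hyN, hzN, h⟩, h₀, h₁, h₂⟩

namespace IsExpandingLiftWith
variable {F : ℝ → ℝ} {d : ℕ} {C l ρ : ℝ} (hF : IsExpandingLiftWith F d C l)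
  (hρ : IsExpansionScale (cmap F) C l ρ)
include hF

lemma backwardGap_add_sum_mul {J : ℕ} {u : Circle1 → ℝ} {v : Fin J → Circle1 → ℝ}
    (hu : Continuous u) (hv : ∀ j, Continuous (v j)) (t : Fin J → ℝ)
    (p : (ℕ → Circle1) × (ℕ → Circle1)) :
    backwardGap F (fun z => u z + ∑ j, t j * v j z) p =
      backwardGap F u p + ∑ j, t j * backwardGap F (v j) p := by
  simp only [backwardGap, hF.backwardSum_add_sum_mul hu hv, mul_sub, Finset.sum_sub_distrib]
  ring

include hρ

/-- The two orbits of `p` share their starting point, so three Bowen balls control all four orbit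
segments that enter. -/
lemma exists_abs_backwardGap_sub_le (N : Set Circle1) {u : Circle1 → ℝ} {K : NNReal}
    (hu : LipschitzWith K u) :
    ∃ A, ∀ n, 1 ≤ n → ∀ e, ∀ p ∈ separatedPairs (cmap F) ρ N ∩ bowenCell (cmap F) (ρ / 2) n e,
      ∀ q ∈ separatedPairs (cmap F) ρ N ∩ bowenCell (cmap F) (ρ / 2) n e,
        |backwardGap F u p - backwardGap F u q| ≤ A * l⁻¹ ^ n := by
  obtain ⟨A, hA⟩ := hF.exists_abs_backwardSum_sub_le hρ hu
  refine ⟨A + A, fun n hn e p hp q hq => ?_⟩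
  obtain ⟨⟨hpy, hpz, -, -, hp, -⟩, hp₀, hp₁, hp₂⟩ := hp
  obtain ⟨⟨hqy, hqz, -, -, hq, -⟩, hq₀, hq₁, hq₂⟩ := hq
  have hbase := hp₀.of_common_centre hq₀
  have h₁ := hA n hn _ _ hpy hqy hbase (hp₁.of_common_centre hq₁)
  have h₂ := hA n hn _ _ hpz hqz (hp ▸ hq ▸ hbase) (hp₂.of_common_centre hq₂)
  rw [backwardGap, backwardGap, sub_sub_sub_comm, add_mul]
  exact (abs_sub _ _).trans (add_le_add h₁ h₂)

lemma exists_abs_backwardGap_sub_le_of_finite {ι : Type*} [Finite ι] (N : Set Circle1)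
    {v : ι → Circle1 → ℝ} {K : ι → NNReal} (hv : ∀ j, LipschitzWith (K j) (v j)) :
    ∃ A > 0, ∀ n, 1 ≤ n → ∀ e, ∀ p ∈ separatedPairs (cmap F) ρ N ∩ bowenCell (cmap F) (ρ / 2) n e,
      ∀ q ∈ separatedPairs (cmap F) ρ N ∩ bowenCell (cmap F) (ρ / 2) n e,
        ∀ j, |backwardGap F (v j) p - backwardGap F (v j) q| ≤ A * l⁻¹ ^ n := by
  choose A hA using fun j => hF.exists_abs_backwardGap_sub_le hρ N (hv j)
  obtain ⟨M, hM⟩ := Finite.exists_le A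
  have hl := hF.inv_rate_pos
  refine ⟨max M 1, lt_max_of_lt_right one_pos, fun n hn e p hp q hq j =>
    (hA j n hn e p hp q hq).trans ?_⟩
  gcongr
  exact le_max_of_le_left (hM j)

lemma volume_setOf_backwardGap_eq_zero {N : Set Circle1}
    (hcov : ∀ θ > 0, ∃ n, 1 ≤ n ∧ ∃ t : Finset Circle1, (t.card : ℝ) ^ 3 ≤ θ * l ^ n ∧
      ∀ x ∈ N, ∃ e ∈ t, BowenClose (cmap F) (ρ / 2) n x e)
    {J : ℕ} {u : Circle1 → ℝ} {v : Fin J → Circle1 → ℝ} {K : NNReal} {L : Fin J → NNReal}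
    (hu : LipschitzWith K u) (hv : ∀ j, LipschitzWith (L j) (v j)) {c : ℝ} (hc : 0 < c)
    (hlow : ∀ p ∈ separatedPairs (cmap F) ρ N, ∃ j, c ≤ |backwardGap F (v j) p|) :
    volume {t : Fin J → ℝ | (∀ i, t i ∈ Icc (0 : ℝ) 1) ∧ ∃ p ∈ separatedPairs (cmap F) ρ N,
      backwardGap F (fun z => u z + ∑ j, t j * v j z) p = 0} = 0 := by
  simp only [hF.backwardGap_add_sum_mul hu.continuous fun j => (hv j).continuous]
  obtain ⟨A, hA, hosc⟩ := hF.exists_abs_backwardGap_sub_le_of_finite hρ N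
    (v := fun j : Option (Fin J) => j.elim u v) (K := fun j => j.elim K L)
    (Option.forall.2 ⟨hu, hv⟩)
  refine volume_setOf_exists_add_sum_eq_zero (ι := Circle1 × Circle1 × Circle1) hc hlow
    fun ε hε => ?_
  obtain ⟨n, hn, t, hcard, ht⟩ := hcov (ε / A) (by positivity)
  refine ⟨t ×ˢ t ×ˢ t, _, A * l⁻¹ ^ n, separatedPairs_subset_biUnion_bowenCell ht,
    fun e p hp q hq => ⟨hosc n hn e p hp q hq none, fun j => hosc n hn e p hp q hq (some j)⟩, ?_⟩
  have hl := hF.rate_pos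
  calc ((t ×ˢ t ×ˢ t).card : ℝ) * (A * l⁻¹ ^ n) = (t.card : ℝ) ^ 3 * (A * l⁻¹ ^ n) := by
        rw [Finset.card_product, Finset.card_product]
        push_cast
        ring
    _ ≤ ε / A * l ^ n * (A * l⁻¹ ^ n) := by gcongr
    _ = ε := by
        rw [inv_pow]
        field_simp

end IsExpandingLiftWith

/-! ### Shyness of supercritical values -/

lemma circleDeriv_add_sum_smul {ι : Type*} [Fintype ι] {f : Circle1 → ℝ} {φ : ι → Circle1 → ℝ}
    (hf : ContDiff ℝ 1 fun x : ℝ => f x) (hφ : ∀ j, ContDiff ℝ 1 fun x : ℝ => φ j x) (t : ι → ℝ) :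
    (circleDeriv fun x => f x + ∑ j, t j • φ j x) =
      fun z => circleDeriv (fun x => f x) z + ∑ j, t j * circleDeriv (fun x => φ j x) z := by
  ext z
  exact ((hf.differentiable one_ne_zero _).hasDerivAt.add <| HasDerivAt.fun_sum fun j _ =>
    ((hφ j).differentiable one_ne_zero _).hasDerivAt.const_mul (t j)).deriv

theorem supercritical_shy_general {F : ℝ → ℝ} {d : ℕ} {C l : ℝ}
    (hF : IsExpandingLiftWith F d C l) {r : ℕ∞} (hr : 1 ≤ r) {D : Set (CrFun 1)} (hD : Dense D)
    (hD₂ : ∀ g ∈ D, ContDiff ℝ 2 fun x : ℝ => g.1 x) (f₀ : CrFun r)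
    (hent : Dynamics.coverEntropy (cmap F) (Kset f₀.1 (cmap F)) <
      ((1 / 3 * Real.log l : ℝ) : EReal))
    (hper : ∀ x ∈ Kset f₀.1 (cmap F), x ∉ Function.periodicPts (cmap F)) :
    ∃ U : Set (CrFun r), IsOpen U ∧ f₀ ∈ U ∧
      ∃ J : ℕ, ∃ φ : Fin J → CrFun 1, (∀ j, φ j ∈ D) ∧
        ∀ f : CrFun r, ContDiff ℝ 2 (fun x : ℝ => f.1 x) →
          volume {t : Fin J → ℝ | (∀ i, t i ∈ Icc (0 : ℝ) 1) ∧
            ∃ g : CrFun r, (g.1 = fun z => f.1 z + ∑ j, t j • (φ j).1 z) ∧ g ∈ U ∧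
              ∃ x : ℝ, IsSupercriticalValue F d g.1 (Kset g.1 (cmap F)) x} = 0 := by
  obtain ⟨ρ, hρ⟩ := hF.exists_isExpansionScale
  have hK := hF.isClosed_Kset hr f₀
  obtain ⟨δ₁, hδ₁, c, hc, J, φ, hφ, hlow⟩ := hF.exists_le_abs_backwardGap hD hK hper hρ.scale_pos
  obtain ⟨δ₂, hδ₂, hcov⟩ := exists_finset_card_pow_three_le_bowenClose_near hF.continuous_cmap
    hK.isCompact hF.rate_pos hent (half_pos hρ.scale_pos)
  set K := Kset f₀.1 (cmap F)
  let δ := min δ₁ δ₂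
  let N : Set Circle1 := {x | ∀ k, (cmap F)^[k] x ∈ Metric.cthickening δ K}
  refine ⟨{g | Kset g.1 (cmap F) ⊆ Metric.thickening δ K},
    hF.isOpen_setOf_Kset_subset hr Metric.isOpen_thickening,
    Metric.self_subset_thickening (lt_min hδ₁ hδ₂) K, J, φ, hφ, fun f hf => ?_⟩
  obtain ⟨A, hA⟩ := exists_lipschitzWith_circleDeriv hf
  choose B hB using fun j => exists_lipschitzWith_circleDeriv (hD₂ (φ j) (hφ j))
  refine measure_mono_null ?_ (hF.volume_setOf_backwardGap_eq_zero hρ (N := N) ?_ hA hB hc ?_)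
  · rintro t ⟨ht, g, hg, hgU, x, hx⟩
    have hgN : Kset g.1 (cmap F) ⊆ N := fun z hz k =>
      Metric.thickening_subset_cthickening _ _ (hgU (mapsTo_Kset.iterate k hz))
    obtain ⟨p, hp, hgap⟩ := hF.exists_separatedPairs_of_isSupercriticalValue hρ
      (CrFun.contDiff_one hr g) hx
    refine ⟨ht, p, separatedPairs_mono hgN hp, ?_⟩
    rw [← circleDeriv_add_sum_smul (CrFun.contDiff_one hr f) fun j => (φ j).2]
    simpa only [backwardGap, sub_eq_zero, hg] using hgap
  · intro θ hθ
    obtain ⟨n, hn, t, ht, hclose⟩ := hcov θ hθ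
    exact ⟨n, hn, t, ht, fun x hx => hclose x fun k =>
      Metric.cthickening_mono (min_le_right _ _) K (hx k)⟩
  · have hN : N ⊆ Metric.cthickening δ₁ K := fun x hx =>
      Metric.cthickening_mono (min_le_left _ _) K (hx 0)
    exact fun p hp => hlow p (separatedPairs_mono hN hp)

/-- Theorem 4.1: shyness of the existence of supercritical values near a function `f_0`
with small entropy and no periodic points in `K(f_0)`. -/
theorem supercritical_shy (F : ℝ → ℝ) (d : ℕ) (hF : AnalyticExpandingLift F d)
    (C l : ℝ) (hC : 0 < C) (hl : 1 < l)
    (hexp : ∀ n : ℕ, 1 ≤ n → ∀ x : ℝ, C * l ^ n ≤ |deriv (F^[n]) x|)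
    (D : Set (CrFun 1)) (hDdense : Dense D)
    (hD2 : ∀ g ∈ D, ContDiff ℝ 2 fun x : ℝ => g.1 ↑x)
    (f0 : CrFun 2)
    (hent : Dynamics.coverEntropy (cmap F) (Kset f0.1 (cmap F)) <
      (((1 / 3) * Real.log l : ℝ) : EReal))
    (hper : ∀ x ∈ Kset f0.1 (cmap F), ∀ n : ℕ, 1 ≤ n → (cmap F)^[n] x ≠ x) :
    ∃ U : Set (CrFun 2), IsOpen U ∧ f0 ∈ U ∧
      ∃ J : ℕ, ∃ φ : Fin J → CrFun 1, (∀ j, φ j ∈ D) ∧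
        ∀ f : CrFun 2,
          volume {t : Fin J → ℝ | (∀ i, t i ∈ Set.Icc (0 : ℝ) 1) ∧
            ∃ g : CrFun 2, (g.1 = fun z => f.1 z + ∑ j, t j • (φ j).1 z) ∧ g ∈ U ∧
              ∃ x : ℝ, IsSupercriticalValue F d g.1 (Kset g.1 (cmap F)) x} = 0 := by
  obtain ⟨hana, hadd, hmono, -⟩ := hF
  have hlift := isExpandingLiftWith_of_monotone hC hl
    (contDiff_iff_contDiffAt.2 fun x => (hana x).contDiffAt) hadd hmono.monotone hexp
  obtain ⟨U, hU, hf₀, J, φ, hφ, hnull⟩ :=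
    supercritical_shy_general hlift one_le_two hDdense hD2 f0 hent
      fun x hx ⟨n, hn, h⟩ => hper x hx n hn h
  exact ⟨U, hU, hf₀, J, φ, hφ, fun f => hnull f f.2⟩
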